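/- arXiv:2511.02338 — 2 statements merged into one kernel-verified Lean document; each statement's English description precedes it below -/
import Mathlib

section
/- Let h ∈ L∞([0,∞); H³_μ) be a solution of the heat equation ∂ₜh = ∂_z²h on (0,∞) × ℝ₊ with boundary condition h(t,0) = 0, whose initial datum h₀ ∈ H³_{μ_in}(ℝ₊) satisfies ∫₀^∞ z h₀(z) dz = 0. Then for every 0 < δ < 2 there is a constant C_δ > 0 depending only on δ such that for all t ≥ 0: ‖∂_z h(t)‖_{L∞_z} + ‖z ∂_z h(t)‖_{L∞_z} + ‖z ∂_z² h(t)‖_{L∞_z} ≤ C_δ ‖h₀‖_{H³_{μ_in}} (1+t)^{−(8−δ)/4}. -/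
open MeasureTheory Filter Set

noncomputable section

/-- The Gaussian weight `μ_λ(t,z) = exp(λz²/(4(1+t)))`. -/
def mu (lam t z : ℝ) : ℝ := Real.exp (lam * z ^ 2 / (4 * (1 + t)))

/-- The squared weighted norm `‖h‖²_{L²_{μ_λ}} = ∫₀^∞ μ_λ(t,z) h(z)² dz`. -/
def L2muSq (lam t : ℝ) (h : ℝ → ℝ) : ENNReal :=
  ∫⁻ z in Set.Ioi (0 : ℝ), ENNReal.ofReal (mu lam t z * h z ^ 2)

/-- The squared weighted Sobolev norm `‖h‖²_{H^m_{μ_λ}} = Σ_{i=0}^m ‖∂_z^i h‖²_{L²_{μ_λ}}`. -/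
def HmuSq (m : ℕ) (lam t : ℝ) (h : ℝ → ℝ) : ENNReal :=
  ∑ i ∈ Finset.range (m + 1), L2muSq lam t (deriv^[i] h)

/-- Sup norm over `(0, ∞)`, valued in `ℝ≥0∞`. -/
def linfPos (h : ℝ → ℝ) : ENNReal := ⨆ z ∈ Set.Ioi (0 : ℝ), ENNReal.ofReal |h z|

/-- The `L∞` norm of a pair, `(‖h₁‖²_{L∞} + ‖h₂‖²_{L∞})^{1/2}`. -/
def pairLinf (h₁ h₂ : ℝ → ℝ) : ENNReal :=
  (linfPos h₁ ^ 2 + linfPos h₂ ^ 2) ^ (1 / 2 : ℝ)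

/-!
In `L²_μ` a heat flow vanishing at `z = 0` decays no slower than the self-similar solution
`z (1 + t)^{-3/2} exp(-z²/(4(1 + t)))`. This follows from a sharp weighted Poincaré inequality, of
which that solution is the ground state. Sacrificing `ε` in the exponent keeps part of the
dissipation, and a Lyapunov functional combining the energies of the successive derivatives then
gains one power of `1 + t` in the squared norm for each derivative.

Since the first moment of the initial datum vanishes, `h = ∂_z²φ` where `φ` is again a heat flow
vanishing at the boundary, namely the double tail primitive of `h(0)` plus `∫₀ᵗ h`; it is controlled
in the weighted norm by Hardy's inequality. The derivative estimate for `φ` gives `h` two extra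
powers, and a weighted Agmon inequality together with `z² ≤ 4(1 + t) μ` converts the result into sup
norms.

The integrations by parts have boundary terms at infinity which the hypotheses do not control
pointwise, so the energies are cut off by `(1 - z²/R²)²` on `[0, R]`; the error is `O(R⁻²)` and
disappears as `R → ∞`.
-/

open Function (uncurry)
open scoped ContDiff Topology

section BivariateCalculus

theorem hasDerivAt_intervalIntegral_of_continuousOn {F F' : ℝ → ℝ → ℝ} {a b t : ℝ} {s : Set ℝ}
    (hs : s ∈ 𝓝 t) (hF : ∀ τ ∈ s, ContinuousOn (F τ) (uIcc a b))
    (hF' : ContinuousOn (uncurry F') (s ×ˢ uIcc a b))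
    (hd : ∀ τ ∈ s, ∀ z ∈ uIcc a b, HasDerivAt (fun x => F x z) (F' τ z) τ) :
    HasDerivAt (fun τ => ∫ z in a..b, F τ z) (∫ z in a..b, F' t z) t := by
  obtain ⟨k, hk, hks, hkc⟩ := local_compact_nhds hs
  obtain ⟨B, hB⟩ := (hkc.prod isCompact_uIcc).exists_bound_of_continuousOn
    (hF'.mono (prod_mono_left hks))
  have hmeas : ∀ {g : ℝ → ℝ}, ContinuousOn g (uIcc a b) →
      AEStronglyMeasurable g (volume.restrict (uIoc a b)) := fun hg =>
    (hg.mono uIoc_subset_uIcc).aestronglyMeasurable measurableSet_uIoc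
  have hF't : ContinuousOn (F' t) (uIcc a b) :=
    hF'.comp (f := fun z => (t, z)) (by fun_prop) fun z hz => ⟨mem_of_mem_nhds hs, hz⟩
  refine (intervalIntegral.hasDerivAt_integral_of_dominated_loc_of_deriv_le
    (bound := fun _ => B) hk ?_ (hF t (mem_of_mem_nhds hs)).intervalIntegrable (hmeas hF't) ?_
    intervalIntegrable_const ?_).2
  · exact eventually_of_mem hs fun τ hτ => hmeas (hF τ hτ)
  · exact .of_forall fun z hz τ hτ => hB (τ, z) ⟨hτ, uIoc_subset_uIcc hz⟩
  · exact .of_forall fun z hz τ hτ => hd τ (hks hτ) z (uIoc_subset_uIcc hz)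

variable {u : ℝ → ℝ → ℝ}

theorem hasDerivAt_left_of_differentiable (hu : Differentiable ℝ (uncurry u)) (t z : ℝ) :
    HasDerivAt (fun s => u s z) (fderiv ℝ (uncurry u) (t, z) (1, 0)) t :=
  (hu (t, z)).hasFDerivAt.comp_hasDerivAt (f := fun s => (s, z)) t
    ((hasDerivAt_id t).prodMk (hasDerivAt_const t z))

theorem hasDerivAt_right_of_differentiable (hu : Differentiable ℝ (uncurry u)) (t z : ℝ) :
    HasDerivAt (u t) (fderiv ℝ (uncurry u) (t, z) (0, 1)) z :=
  (hu (t, z)).hasFDerivAt.comp_hasDerivAt (f := fun y => (t, y)) z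
    ((hasDerivAt_const z t).prodMk (hasDerivAt_id z))

theorem contDiff_deriv_left (hu : ContDiff ℝ ∞ (uncurry u)) :
    ContDiff ℝ ∞ (uncurry fun t z => deriv (fun s => u s z) t) := by
  have h : uncurry (fun t z => deriv (fun s => u s z) t)
      = fun p => fderiv ℝ (uncurry u) p (1, 0) :=
    funext fun p => (hasDerivAt_left_of_differentiable (hu.differentiable (by simp)) p.1 p.2).deriv
  rw [h]
  exact (hu.fderiv_right (by simp)).clm_apply contDiff_const

theorem contDiff_deriv_right (hu : ContDiff ℝ ∞ (uncurry u)) :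
    ContDiff ℝ ∞ (uncurry fun t => deriv (u t)) := by
  have h : uncurry (fun t => deriv (u t)) = fun p => fderiv ℝ (uncurry u) p (0, 1) :=
    funext fun p => (hasDerivAt_right_of_differentiable (hu.differentiable (by simp)) p.1 p.2).deriv
  rw [h]
  exact (hu.fderiv_right (by simp)).clm_apply contDiff_const

theorem contDiff_right (hu : ContDiff ℝ ∞ (uncurry u)) (t : ℝ) : ContDiff ℝ ∞ (u t) :=
  hu.comp (contDiff_const.prodMk contDiff_id)

theorem hasDerivAt_left (hu : ContDiff ℝ ∞ (uncurry u)) (t z : ℝ) :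
    HasDerivAt (fun s => u s z) (deriv (fun s => u s z) t) t :=
  (hasDerivAt_left_of_differentiable (hu.differentiable (by simp)) t z).differentiableAt.hasDerivAt

theorem deriv_left_deriv_right_comm (hu : ContDiff ℝ ∞ (uncurry u)) (t z : ℝ) :
    deriv (fun s => deriv (u s) z) t = deriv (fun y => deriv (fun s => u s y) t) z := by
  have hd : Differentiable ℝ (uncurry u) := hu.differentiable (by simp)
  have hd' (v : ℝ × ℝ) : Differentiable ℝ (uncurry fun s y => fderiv ℝ (uncurry u) (s, y) v) :=
    ((hu.fderiv_right (m := ∞) (by simp)).clm_apply contDiff_const).differentiable (by simp)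
  have hsnd (v w : ℝ × ℝ) : fderiv ℝ (uncurry fun s y => fderiv ℝ (uncurry u) (s, y) v) (t, z) w
      = fderiv ℝ (fderiv ℝ (uncurry u)) (t, z) w v := by
    have h := ((hu.fderiv_right (m := ∞) (by simp)).differentiable (by simp)
      (t, z)).hasFDerivAt.clm_apply (hasFDerivAt_const v (t, z))
    refine (congrArg (· w) h.fderiv).trans ?_
    simp [ContinuousLinearMap.flip_apply]
  simp only [(hasDerivAt_left_of_differentiable hd _ _).deriv,
    (hasDerivAt_right_of_differentiable hd _ _).deriv,
    (hasDerivAt_left_of_differentiable (hd' _) t z).deriv,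
    (hasDerivAt_right_of_differentiable (hd' _) t z).deriv, hsnd]
  exact (hu.contDiffAt.isSymmSndFDerivAt (by
    simp only [minSmoothness_of_isRCLikeNormedField]
    exact WithTop.coe_le_coe.2 (le_top : (2 : ℕ∞) ≤ ⊤))).eq _ _

theorem contDiff_succ_of_partial_derivs {ft fz : ℝ → ℝ → ℝ} {n : ℕ}
    (hft : ContDiff ℝ n (uncurry ft)) (hfz : ContDiff ℝ n (uncurry fz))
    (ht : ∀ t z, HasDerivAt (fun s => u s z) (ft t z) t)
    (hz : ∀ t z, HasDerivAt (u t) (fz t z) z) : ContDiff ℝ (n + 1 : ℕ) (uncurry u) := by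
  have hcont {g : ℝ → ℝ → ℝ} (hg : ContDiff ℝ n (uncurry g)) : Continuous (uncurry fun t z =>
      ContinuousLinearMap.toSpanSingleton ℝ (g t z)) :=
    (ContinuousLinearMap.toSpanSingletonCLE (𝕜 := ℝ)).continuous.comp hg.continuous
  refine contDiff_succ_iff_hasFDerivAt.2 ⟨fun p =>
    uncurry ft p • ContinuousLinearMap.fst ℝ ℝ ℝ + uncurry fz p • ContinuousLinearMap.snd ℝ ℝ ℝ,
    (hft.smul contDiff_const).add (hfz.smul contDiff_const), fun p => ?_⟩
  refine (hasStrictFDerivAt_uncurry_coprod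
    (f₁ := fun t z => ContinuousLinearMap.toSpanSingleton ℝ (ft t z))
    (f₂ := fun t z => ContinuousLinearMap.toSpanSingleton ℝ (fz t z))
    (.of_forall fun q => (ht q.1 q.2).hasFDerivAt) (.of_forall fun q => (hz q.1 q.2).hasFDerivAt)
    (hcont hft).continuousAt (hcont hfz).continuousAt).hasFDerivAt.congr_fderiv ?_
  ext <;> simp [uncurry, Function.HasUncurry.uncurry]

theorem hasDerivAt_add_integral_left (hu : ContDiff ℝ ∞ (uncurry u)) {F : ℝ → ℝ} {z c : ℝ}
    (hF : HasDerivAt F c z) (t : ℝ) :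
    HasDerivAt (fun y => F y + ∫ τ in (0 : ℝ)..t, u τ y)
      (c + ∫ τ in (0 : ℝ)..t, deriv (u τ) z) z := by
  have hflip {g : ℝ → ℝ → ℝ} (hg : ContDiff ℝ ∞ (uncurry g)) :
      Continuous (uncurry fun y τ => g τ y) := hg.continuous.comp continuous_swap
  refine hF.add (hasDerivAt_intervalIntegral_of_continuousOn (F := fun y τ => u τ y) univ_mem
    (fun y _ => ((hflip hu).comp (Continuous.prodMk_right y)).continuousOn)
    (hflip (contDiff_deriv_right hu)).continuousOn fun y _ τ _ => ?_)
  exact ((contDiff_right hu τ).differentiable (by simp) y).hasDerivAt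

theorem hasDerivAt_integral_left (hu : ContDiff ℝ ∞ (uncurry u)) (t z : ℝ) :
    HasDerivAt (fun s => ∫ τ in (0 : ℝ)..s, u τ z) (u t z) t :=
  (hu.continuous.comp (Continuous.prodMk_left z)).integral_hasStrictDerivAt 0 t |>.hasDerivAt

theorem contDiff_add_integral_left {F : ℝ → ℝ} (hF : ContDiff ℝ ∞ F)
    (hu : ContDiff ℝ ∞ (uncurry u)) :
    ContDiff ℝ ∞ (uncurry fun t z => F z + ∫ τ in (0 : ℝ)..t, u τ z) := by
  refine contDiff_infty.2 fun n => ?_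
  induction n generalizing F u with
  | zero =>
    have hint : Continuous fun p : ℝ × ℝ => ∫ τ in (0 : ℝ)..p.1, u τ p.2 :=
      intervalIntegral.continuous_parametric_intervalIntegral_of_continuous
        (f := fun p : ℝ × ℝ => fun τ => u τ p.2) (s := Prod.fst)
        (hu.continuous.comp (f := fun q : (ℝ × ℝ) × ℝ => (q.2, q.1.2)) (by fun_prop)) continuous_fst
    exact contDiff_zero.2 ((hF.continuous.comp continuous_snd).add hint)
  | succ n ih =>
    exact contDiff_succ_of_partial_derivs (contDiff_infty.1 hu n)
      (ih (contDiff_infty_iff_deriv.1 hF).2 (contDiff_deriv_right hu))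
      (fun t z => (hasDerivAt_integral_left hu t z).const_add (F z))
      fun t z => hasDerivAt_add_integral_left hu (hF.differentiable (by simp) z).hasDerivAt t

end BivariateCalculus

/-- A smooth solution of the heat equation `∂ₜu = ∂_z²u` on the closed quarter plane `t, z ≥ 0`.
It is a smooth function on the whole plane, so that one-sided derivatives never occur. -/
structure IsHeatFlow (u : ℝ → ℝ → ℝ) : Prop where
  smooth : ContDiff ℝ ∞ (uncurry u)
  heat_eq : ∀ t ≥ 0, ∀ z ≥ 0, deriv (fun s => u s z) t = deriv (deriv (u t)) z

/-- A heat flow with the Dirichlet condition `u(t,0) = 0`. -/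
structure IsDirichletHeatFlow (u : ℝ → ℝ → ℝ) : Prop extends IsHeatFlow u where
  boundary : ∀ t ≥ 0, u t 0 = 0

section HeatFlow

variable {u : ℝ → ℝ → ℝ}

theorem IsHeatFlow.smooth_right (hu : IsHeatFlow u) (t : ℝ) : ContDiff ℝ ∞ (u t) :=
  contDiff_right hu.smooth t

theorem IsHeatFlow.contDiff_two (hu : IsHeatFlow u) (t : ℝ) : ContDiff ℝ 2 (u t) :=
  mod_cast contDiff_infty.1 (hu.smooth_right t) 2

theorem IsHeatFlow.hasDerivAt_time (hu : IsHeatFlow u) {t z : ℝ} (ht : 0 ≤ t) (hz : 0 ≤ z) :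
    HasDerivAt (fun s => u s z) (deriv (deriv (u t)) z) t :=
  hu.heat_eq t ht z hz ▸ hasDerivAt_left hu.smooth t z

theorem IsHeatFlow.deriv_right (hu : IsHeatFlow u) : IsHeatFlow fun t => deriv (u t) where
  smooth := contDiff_deriv_right hu.smooth
  heat_eq := by
    intro t ht z hz
    have hsmooth := contDiff_deriv_right hu.smooth
    have hinterior : EqOn (fun y => deriv (fun s => deriv (u s) y) t)
        (deriv (deriv (deriv (u t)))) (Ioi 0) := fun y hy =>
      (deriv_left_deriv_right_comm hu.smooth t y).trans <| EventuallyEq.deriv_eq <|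
        eventually_of_mem (Ioi_mem_nhds hy) fun x hx => hu.heat_eq t ht x (le_of_lt hx)
    have hclosure := hinterior.closure (contDiff_right (contDiff_deriv_left hsmooth) t).continuous
      (contDiff_right (contDiff_deriv_right (contDiff_deriv_right hsmooth)) t).continuous
    exact hclosure (closure_Ioi (0 : ℝ) ▸ hz)

theorem IsHeatFlow.iterate_deriv_right (hu : IsHeatFlow u) (k : ℕ) :
    IsHeatFlow fun t => deriv^[k] (u t) := by
  induction k with
  | zero => exact hu
  | succ k ih => simpa only [Function.iterate_succ_apply'] using ih.deriv_right

theorem IsDirichletHeatFlow.iterate_deriv_even_zero (hu : IsDirichletHeatFlow u) (j : ℕ) {t : ℝ}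
    (ht : 0 < t) : deriv^[2 * j] (u t) 0 = 0 := by
  induction j generalizing t with
  | zero => exact hu.boundary t ht.le
  | succ j ih =>
    have hconst : (fun s => deriv^[2 * j] (u s) 0) =ᶠ[𝓝 t] fun _ => 0 :=
      eventually_of_mem (Ioi_mem_nhds ht) fun s hs => ih hs
    have hheat := (hu.iterate_deriv_right (2 * j)).heat_eq t ht.le 0 le_rfl
    rw [hconst.deriv_eq, deriv_const] at hheat
    rw [mul_add_one, Function.iterate_succ_apply', Function.iterate_succ_apply', ← hheat]

theorem IsDirichletHeatFlow.iterate_deriv_mul_succ_zero (hu : IsDirichletHeatFlow u) (k : ℕ)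
    {t : ℝ} (ht : 0 < t) : deriv^[k] (u t) 0 * deriv^[k + 1] (u t) 0 = 0 := by
  obtain ⟨j, rfl | rfl⟩ := k.even_or_odd'
  · rw [hu.iterate_deriv_even_zero j ht, zero_mul]
  · rw [show 2 * j + 1 + 1 = 2 * (j + 1) by ring, hu.iterate_deriv_even_zero (j + 1) ht, mul_zero]

variable {F : ℝ → ℝ}

theorem IsHeatFlow.deriv_deriv_add_integral (hu : IsHeatFlow u) (hF : ContDiff ℝ ∞ F)
    (hF₂ : deriv^[2] F = u 0) {t z : ℝ} (ht : 0 ≤ t) (hz : 0 ≤ z) :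
    deriv^[2] (fun y => F y + ∫ τ in (0 : ℝ)..t, u τ y) z = u t z := by
  have hF' := (contDiff_infty_iff_deriv.1 hF).2
  have hderiv : deriv (fun y => F y + ∫ τ in (0 : ℝ)..t, u τ y)
      = fun y => deriv F y + ∫ τ in (0 : ℝ)..t, deriv (u τ) y := funext fun y =>
    (hasDerivAt_add_integral_left hu.smooth (hF.differentiable (by simp) y).hasDerivAt t).deriv
  have hFTC : ∫ τ in (0 : ℝ)..t, deriv (deriv (u τ)) z = u t z - u 0 z := by
    refine intervalIntegral.integral_eq_sub_of_hasDerivAt (f := fun τ => u τ z)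
      (fun τ hτ => hu.hasDerivAt_time (uIcc_of_le ht ▸ hτ).1 hz) ?_
    exact ((contDiff_deriv_right (contDiff_deriv_right hu.smooth)).continuous.comp
      (Continuous.prodMk_left z)).intervalIntegrable 0 t
  have hFz : deriv (deriv F) z = u 0 z := congrFun hF₂ z
  simp only [Function.iterate_succ_apply', Function.iterate_zero_apply, hderiv]
  rw [(hasDerivAt_add_integral_left (contDiff_deriv_right hu.smooth)
    (hF'.differentiable (by simp) z).hasDerivAt t).deriv, hFTC, hFz, add_sub_cancel]

theorem IsDirichletHeatFlow.add_integral (hu : IsDirichletHeatFlow u) (hF : ContDiff ℝ ∞ F)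
    (hF₂ : deriv^[2] F = u 0) (hF₀ : F 0 = 0) :
    IsDirichletHeatFlow fun t z => F z + ∫ τ in (0 : ℝ)..t, u τ z where
  smooth := contDiff_add_integral_left hF hu.smooth
  heat_eq t ht z hz :=
    ((hasDerivAt_integral_left hu.smooth t z).const_add (F z)).deriv.trans
      (hu.deriv_deriv_add_integral hF hF₂ ht hz).symm
  boundary t ht := by
    have hzero : ∫ τ in (0 : ℝ)..t, u τ 0 = 0 :=
      (intervalIntegral.integral_congr fun τ hτ => hu.boundary τ (uIcc_of_le ht ▸ hτ).1).trans
        intervalIntegral.integral_zero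
    rw [hF₀, hzero, add_zero]

end HeatFlow

/-- The Gaussian-weighted energy `∫₀ᴿ v(z) e^{σz²} f(z)² dz` of `f` on `[0, R]`, with an additional
weight `v` used for cutting off. -/
def localEnergy (v : ℝ → ℝ) (R σ : ℝ) (f : ℝ → ℝ) : ℝ :=
  ∫ z in (0 : ℝ)..R, v z * (Real.exp (σ * z ^ 2) * f z ^ 2)

/-- The time derivative of `localEnergy v R (σ t) (f t)` when `σ' = -4σ²` and `∂ₜf = ∂_z²f`. -/
def localEnergyRate (v : ℝ → ℝ) (R σ : ℝ) (f : ℝ → ℝ) : ℝ :=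
  ∫ z in (0 : ℝ)..R, v z * (-(4 * σ ^ 2 * z ^ 2) * Real.exp (σ * z ^ 2) * f z ^ 2
    + 2 * Real.exp (σ * z ^ 2) * f z * deriv (deriv f) z)

/-- The base `1 - (z/R)²` of the cutoff functions; its square is the weight in the energies. -/
def bump (R z : ℝ) : ℝ := 1 - z ^ 2 / R ^ 2

section LocalEnergy

variable {R σ : ℝ} {f v : ℝ → ℝ}

theorem continuous_bump : Continuous (bump R) := by
  unfold bump
  fun_prop

theorem bump_self (hR : R ≠ 0) : bump R R = 0 := by
  simp [bump, hR]

theorem bump_nonneg {z : ℝ} (hz : z ∈ Icc 0 R) : 0 ≤ bump R z :=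
  sub_nonneg.2 (div_le_one_of_le₀ (pow_le_pow_left₀ hz.1 hz.2 2) (sq_nonneg R))

theorem bump_le_one (z : ℝ) : bump R z ≤ 1 :=
  sub_le_self 1 (by positivity)

theorem hasDerivAt_bump (z : ℝ) : HasDerivAt (bump R) (-(2 * z / R ^ 2)) z :=
  (((hasDerivAt_pow 2 z).div_const (R ^ 2)).const_sub 1).congr_deriv (by simp)

theorem hasDerivAt_gaussian (σ z : ℝ) :
    HasDerivAt (fun y => Real.exp (σ * y ^ 2)) (2 * σ * z * Real.exp (σ * z ^ 2)) z :=
  ((hasDerivAt_pow 2 z).const_mul σ).exp.congr_deriv (by push_cast; ring)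

theorem localEnergy_nonneg (hR : 0 ≤ R) (hv : ∀ z ∈ Icc 0 R, 0 ≤ v z) :
    0 ≤ localEnergy v R σ f :=
  intervalIntegral.integral_nonneg hR fun z hz => mul_nonneg (hv z hz) (by positivity)

theorem localEnergy_one_nonneg (hR : 0 ≤ R) : 0 ≤ localEnergy 1 R σ f :=
  localEnergy_nonneg hR fun _ _ => zero_le_one

theorem hasDerivAt_energyFlux (hf : ContDiff ℝ 2 f) (z : ℝ) :
    HasDerivAt (fun y => Real.exp (σ * y ^ 2) * (2 * bump R y ^ 2 * (f y * deriv f y)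
        - (2 * σ * y * bump R y ^ 2 - 4 * y / R ^ 2 * bump R y) * f y ^ 2))
      (bump R z ^ 2 * (-(4 * σ ^ 2 * z ^ 2) * Real.exp (σ * z ^ 2) * f z ^ 2
          + 2 * Real.exp (σ * z ^ 2) * f z * deriv (deriv f) z)
        + 2 * (bump R z ^ 2 * (Real.exp (σ * z ^ 2) * deriv f z ^ 2))
        - 2 * σ * (bump R z ^ 2 * (Real.exp (σ * z ^ 2) * f z ^ 2))
        + (16 * σ / R ^ 2 * (bump R z * z ^ 2) + 4 / R ^ 2 * bump R z - 8 * (z / R ^ 2) ^ 2)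
          * (Real.exp (σ * z ^ 2) * f z ^ 2)) z := by
  have df := (hf.differentiable two_ne_zero z).hasDerivAt
  have df' := ((hf.iterate_deriv' 1 1).differentiable one_ne_zero z).hasDerivAt
  have db := hasDerivAt_bump (R := R) z
  have dcoeff := (((hasDerivAt_id' z).const_mul (2 * σ)).mul (db.fun_pow 2)).sub
    ((((hasDerivAt_id' z).const_mul 4).div_const (R ^ 2)).mul db)
  refine ((hasDerivAt_gaussian σ z).mul ((((db.fun_pow 2).const_mul 2).mul (df.mul df')).sub
    (dcoeff.mul (df.fun_pow 2)))).congr_deriv ?_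
  simp only [Pi.mul_apply, Pi.sub_apply, Function.iterate_one]
  ring

theorem localEnergyRate_bump_sq_le (hR : 0 < R) (hf : ContDiff ℝ 2 f)
    (h₀ : f 0 * deriv f 0 = 0) :
    localEnergyRate (fun z => bump R z ^ 2) R σ f
      ≤ -2 * localEnergy (fun z => bump R z ^ 2) R σ (deriv f)
        + 2 * σ * localEnergy (fun z => bump R z ^ 2) R σ f
        + 8 / R ^ 2 * localEnergy 1 R σ f
        - 16 * σ / R ^ 2 * localEnergy (fun z => bump R z * z ^ 2) R σ f := by
  have cb := continuous_bump (R := R)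
  have cf := hf.continuous
  have cf' := hf.continuous_deriv one_le_two
  have key := intervalIntegral.integral_le_sub_of_hasDeriv_right_of_le
    (φ := fun z => bump R z ^ 2 * (-(4 * σ ^ 2 * z ^ 2) * Real.exp (σ * z ^ 2) * f z ^ 2
          + 2 * Real.exp (σ * z ^ 2) * f z * deriv (deriv f) z)
        + 2 * (bump R z ^ 2 * (Real.exp (σ * z ^ 2) * deriv f z ^ 2))
        - 2 * σ * (bump R z ^ 2 * (Real.exp (σ * z ^ 2) * f z ^ 2))
        - 8 / R ^ 2 * ((1 : ℝ → ℝ) z * (Real.exp (σ * z ^ 2) * f z ^ 2))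
        + 16 * σ / R ^ 2 * (bump R z * z ^ 2 * (Real.exp (σ * z ^ 2) * f z ^ 2)))
    hR.le (by fun_prop) (fun z _ => (hasDerivAt_energyFlux (R := R) (σ := σ) hf z).hasDerivWithinAt)
    (Continuous.integrableOn_Icc (by simp only [Pi.one_apply]; fun_prop)) fun z hz => ?_
  · have hint {g : ℝ → ℝ} (hg : Continuous g) := hg.intervalIntegrable (μ := volume) 0 R
    rw [bump_self hR.ne', intervalIntegral.integral_add (hint (by fun_prop)) (hint (by fun_prop)),
      intervalIntegral.integral_sub (hint (by fun_prop)) (hint (by fun_prop)),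
      intervalIntegral.integral_sub (hint (by fun_prop)) (hint (by fun_prop)),
      intervalIntegral.integral_add (hint (by fun_prop)) (hint (by fun_prop))] at key
    simp only [intervalIntegral.integral_const_mul] at key
    simp only [localEnergyRate, localEnergy]
    linear_combination key - 2 * Real.exp (σ * 0 ^ 2) * bump R 0 ^ 2 * h₀
  · have hsq : (z / R ^ 2) ^ 2 = (1 - bump R z) / R ^ 2 := by
      unfold bump
      ring
    have hgap : 0 ≤ 12 / R ^ 2 * bump R z * (Real.exp (σ * z ^ 2) * f z ^ 2) := by
      have := bump_nonneg (Ioo_subset_Icc_self hz)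
      positivity
    rw [Pi.one_apply, hsq]
    linear_combination hgap

-- The square on the right vanishes for `f = z e^{-σz²}`, so `4σ` is the sharp Poincaré constant.
theorem hasDerivAt_virialFlux {z : ℝ} (hz : z ≠ 0) (hf : ContDiff ℝ 1 f) :
    HasDerivAt
      (fun y => bump R y ^ 2 * (Real.exp (σ * y ^ 2) * (f y ^ 2 / y - 2 * σ * y * f y ^ 2)))
      (bump R z ^ 2 * (Real.exp (σ * z ^ 2) * deriv f z ^ 2)
        - 4 * σ * (bump R z ^ 2 * (Real.exp (σ * z ^ 2) * f z ^ 2))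
        + 8 * σ / R ^ 2 * (bump R z * z ^ 2 * (Real.exp (σ * z ^ 2) * f z ^ 2))
        - Real.exp (σ * z ^ 2) * (bump R z ^ 2 * (deriv f z - f z / z + 2 * σ * z * f z) ^ 2
          + 4 / R ^ 2 * bump R z * f z ^ 2)) z := by
  have df := ((hf.differentiable one_ne_zero z).hasDerivAt).fun_pow 2
  refine (((hasDerivAt_bump (R := R) z).fun_pow 2).mul ((hasDerivAt_gaussian σ z).mul
    ((df.div (hasDerivAt_id' z) hz).sub
      (((hasDerivAt_id' z).const_mul (2 * σ)).mul df)))).congr_deriv ?_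
  simp only [Pi.mul_apply, Pi.sub_apply, Pi.div_apply]
  field_simp
  ring

theorem four_mul_localEnergy_le_localEnergy_deriv (hR : 0 < R) (hf : ContDiff ℝ 1 f)
    (h₀ : f 0 = 0) :
    4 * σ * localEnergy (fun z => bump R z ^ 2) R σ f
      ≤ localEnergy (fun z => bump R z ^ 2) R σ (deriv f)
        + 8 * σ / R ^ 2 * localEnergy (fun z => bump R z * z ^ 2) R σ f := by
  have cb := continuous_bump (R := R)
  have cf := hf.continuous
  have hquot : (fun z => f z ^ 2 / z) = fun z => f z * dslope f 0 z := funext fun z => by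
    obtain rfl | hz := eq_or_ne z 0
    · simp [h₀]
    · rw [dslope_of_ne f hz, slope_def_field, h₀, sub_zero, sub_zero, mul_div_assoc', sq]
  have cquot : Continuous fun z => f z ^ 2 / z := hquot ▸ cf.mul
    (continuous_iff_continuousAt.2 fun z => by
      obtain rfl | hz := eq_or_ne z 0
      · exact continuousAt_dslope_same.2 (hf.differentiable one_ne_zero 0)
      · exact (continuousAt_dslope_of_ne hz).2 cf.continuousAt)
  have key := intervalIntegral.sub_le_integral_of_hasDeriv_right_of_le
    (φ := fun z => bump R z ^ 2 * (Real.exp (σ * z ^ 2) * deriv f z ^ 2)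
        - 4 * σ * (bump R z ^ 2 * (Real.exp (σ * z ^ 2) * f z ^ 2))
        + 8 * σ / R ^ 2 * (bump R z * z ^ 2 * (Real.exp (σ * z ^ 2) * f z ^ 2)))
    hR.le (by fun_prop) (fun z hz => (hasDerivAt_virialFlux (R := R) (σ := σ)
      hz.1.ne' hf).hasDerivWithinAt) (Continuous.integrableOn_Icc (by fun_prop))
    fun z hz => sub_le_self _ ?_
  · have hint {g : ℝ → ℝ} (hg : Continuous g) := hg.intervalIntegrable (μ := volume) 0 R
    rw [bump_self hR.ne', intervalIntegral.integral_add (hint (by fun_prop)) (hint (by fun_prop)),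
      intervalIntegral.integral_sub (hint (by fun_prop)) (hint (by fun_prop)), h₀] at key
    simp only [intervalIntegral.integral_const_mul] at key
    simp only [localEnergy]
    linear_combination key
  · have := bump_nonneg (Ioo_subset_Icc_self hz)
    positivity

theorem localEnergyRate_bump_sq_le_of_zero (hR : 0 < R) (hσ : 0 ≤ σ) (hf : ContDiff ℝ 2 f)
    (h₀ : f 0 = 0) {θ : ℝ} (hθ₀ : 0 ≤ θ) (hθ₁ : θ ≤ 1) :
    localEnergyRate (fun z => bump R z ^ 2) R σ f
      ≤ -2 * θ * localEnergy (fun z => bump R z ^ 2) R σ (deriv f)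
        - (6 - 8 * θ) * σ * localEnergy (fun z => bump R z ^ 2) R σ f
        + 8 / R ^ 2 * localEnergy 1 R σ f := by
  have henergy := localEnergyRate_bump_sq_le (σ := σ) hR hf (by rw [h₀, zero_mul])
  have hpoincare := mul_le_mul_of_nonneg_left (four_mul_localEnergy_le_localEnergy_deriv (σ := σ)
    hR (hf.of_le one_le_two) h₀) (by linarith : 0 ≤ 2 * (1 - θ))
  have hremainder : 0 ≤ 16 * σ / R ^ 2 * θ * localEnergy (fun z => bump R z * z ^ 2) R σ f :=
    mul_nonneg (by positivity)
      (localEnergy_nonneg hR.le fun z hz => mul_nonneg (bump_nonneg hz) (sq_nonneg z))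
  linear_combination henergy + hpoincare + hremainder

end LocalEnergy

/-- The exponent rate `σ(t) = 1/(4(1+t))` of the weight, `μ(t,z) = e^{σ(t)z²}`. -/
def gaussRate (t : ℝ) : ℝ := 1 / (4 * (1 + t))

theorem gaussRate_pos {t : ℝ} (ht : 0 ≤ t) : 0 < gaussRate t := by
  unfold gaussRate
  positivity

theorem mul_gaussRate {t : ℝ} (ht : -1 < t) : (1 + t) * gaussRate t = 1 / 4 := by
  have : 1 + t ≠ 0 := by linarith
  unfold gaussRate
  field_simp

theorem hasDerivAt_gaussRate {t : ℝ} (ht : -1 < t) :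
    HasDerivAt gaussRate (-(4 * gaussRate t ^ 2)) t := by
  have hne : 4 * (1 + t) ≠ 0 := by linarith
  refine ((hasDerivAt_const t 1).div (((hasDerivAt_id' t).const_add 1).const_mul 4)
    hne).congr_deriv ?_
  unfold gaussRate
  field_simp
  ring

section EnergyEvolution

variable {u : ℝ → ℝ → ℝ} {v : ℝ → ℝ} {R t : ℝ}

theorem IsHeatFlow.hasDerivAt_localEnergy (hu : IsHeatFlow u) (hv : Continuous v) (hR : 0 ≤ R)
    (ht : 0 ≤ t) : HasDerivAt (fun s => localEnergy v R (gaussRate s) (u s))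
      (localEnergyRate v R (gaussRate t) (u t)) t := by
  have hs : Ioi (-1) ∈ 𝓝 t := Ioi_mem_nhds (by linarith)
  have hrate : ContinuousOn (fun p : ℝ × ℝ => gaussRate p.1) (Ioi (-1) ×ˢ uIcc 0 R) := fun p hp =>
    ((hasDerivAt_gaussRate hp.1).continuousAt.comp continuousAt_fst).continuousWithinAt
  have cu := hu.smooth.continuous
  have cut := (contDiff_deriv_left hu.smooth).continuous
  have hd (s : ℝ) (hs : s ∈ Ioi (-1)) (z : ℝ) :=
    (((hasDerivAt_gaussRate hs).mul_const (z ^ 2)).exp.mul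
      ((hasDerivAt_left hu.smooth s z).fun_pow 2)).const_mul (v z)
  refine (hasDerivAt_intervalIntegral_of_continuousOn hs (fun s _ => ?_) ?_
    fun s hs z _ => hd s hs z).congr_deriv ?_
  · have := (hu.smooth_right s).continuous
    fun_prop
  · have := hv.comp (continuous_snd (X := ℝ))
    unfold uncurry at cu cut ⊢
    fun_prop
  · refine intervalIntegral.integral_congr fun z hz => ?_
    simp only [(hu.hasDerivAt_time ht (uIcc_of_le hR ▸ hz).1).deriv]
    ring

end EnergyEvolution

section Lyapunov

variable {u : ℝ → ℝ → ℝ} {R t ε : ℝ}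

/-- The energy of `∂_z^k u(t)`, cut off at `R` and normalised by the power `(1+t)^{3/2-ε+k}`
by which it is expected to decay. -/
def scaledEnergy (u : ℝ → ℝ → ℝ) (ε R : ℝ) (k : ℕ) (t : ℝ) : ℝ :=
  (1 + t) ^ (3 / 2 - ε + k) *
    localEnergy (fun z => bump R z ^ 2) R (gaussRate t) (deriv^[k] (u t))

/-- The time derivative of `scaledEnergy u ε R k` along a heat flow. -/
def scaledEnergyRate (u : ℝ → ℝ → ℝ) (ε R : ℝ) (k : ℕ) (t : ℝ) : ℝ :=
  (3 / 2 - ε + k) * (1 + t) ^ (3 / 2 - ε + k - 1) *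
      localEnergy (fun z => bump R z ^ 2) R (gaussRate t) (deriv^[k] (u t))
    + (1 + t) ^ (3 / 2 - ε + k) *
      localEnergyRate (fun z => bump R z ^ 2) R (gaussRate t) (deriv^[k] (u t))

theorem scaledEnergy_nonneg (hR : 0 ≤ R) (ht : 0 ≤ t) (k : ℕ) : 0 ≤ scaledEnergy u ε R k t :=
  mul_nonneg (by positivity) (localEnergy_nonneg hR fun z _ => sq_nonneg (bump R z))

theorem IsHeatFlow.hasDerivAt_scaledEnergy (hu : IsHeatFlow u) (hR : 0 ≤ R) (ht : 0 ≤ t) (k : ℕ) :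
    HasDerivAt (scaledEnergy u ε R k) (scaledEnergyRate u ε R k t) t :=
  ((((hasDerivAt_id' t).const_add 1).rpow_const (Or.inl (by linarith))).mul
    ((hu.iterate_deriv_right k).hasDerivAt_localEnergy
      (v := fun z => bump R z ^ 2) (continuous_bump.pow 2) hR ht)).congr_deriv
      (by simp only [scaledEnergyRate, one_mul])

theorem mul_scaledEnergyRate (ht : 0 ≤ t) (k : ℕ) :
    (1 + t) * scaledEnergyRate u ε R k t = (3 / 2 - ε + k) * scaledEnergy u ε R k t
      + (1 + t) ^ (3 / 2 - ε + k) * ((1 + t) *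
        localEnergyRate (fun z => bump R z ^ 2) R (gaussRate t) (deriv^[k] (u t))) := by
  have hs : 1 + t ≠ 0 := by linarith
  simp only [scaledEnergyRate, scaledEnergy, Real.rpow_sub_one hs]
  field_simp

theorem scaledEnergy_succ (ht : 0 ≤ t) (k : ℕ) :
    scaledEnergy u ε R (k + 1) t = (1 + t) ^ (3 / 2 - ε + k) * ((1 + t) *
      localEnergy (fun z => bump R z ^ 2) R (gaussRate t) (deriv (deriv^[k] (u t)))) := by
  rw [scaledEnergy, Nat.cast_succ, ← add_assoc, Real.rpow_add_one (by linarith),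
    Function.iterate_succ_apply', mul_assoc]

theorem IsDirichletHeatFlow.scaledEnergyRate_zero_le (hu : IsDirichletHeatFlow u) (hε₀ : 0 ≤ ε)
    (hε₁ : ε ≤ 1) (hR : 0 < R) (ht : 0 ≤ t) :
    (1 + t) * scaledEnergyRate u ε R 0 t ≤ -ε * scaledEnergy u ε R 1 t
      + (1 + t) ^ (3 / 2 - ε) * ((1 + t) * (8 / R ^ 2 * localEnergy 1 R (gaussRate t) (u t))) := by
  have hs : 0 ≤ 1 + t := by linarith
  have hrate := mul_le_mul_of_nonneg_left (mul_le_mul_of_nonneg_left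
    (localEnergyRate_bump_sq_le_of_zero hR (gaussRate_pos ht).le (hu.contDiff_two t)
      (hu.boundary t ht) (by linarith : 0 ≤ ε / 2) (by linarith)) hs)
    (Real.rpow_nonneg hs (3 / 2 - ε))
  have hσ := mul_gaussRate (by linarith : -1 < t)
  have hsucc := scaledEnergy_succ (u := u) (ε := ε) (R := R) ht 0
  rw [zero_add] at hsucc
  rw [mul_scaledEnergyRate ht, hsucc, scaledEnergy]
  simp only [Nat.cast_zero, add_zero, Function.iterate_zero_apply]
  linear_combination hrate - (6 - 4 * ε) * (1 + t) ^ (3 / 2 - ε) *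
    localEnergy (fun z => bump R z ^ 2) R (gaussRate t) (u t) * hσ

theorem IsDirichletHeatFlow.scaledEnergyRate_le (hu : IsDirichletHeatFlow u)
    (hR : 0 < R) (ht : 0 < t) (k : ℕ) :
    (1 + t) * scaledEnergyRate u ε R k t
      ≤ (k + 2 - ε) * scaledEnergy u ε R k t - 2 * scaledEnergy u ε R (k + 1) t
        + (1 + t) ^ (3 / 2 - ε + k) * ((1 + t) * (8 / R ^ 2 *
          localEnergy 1 R (gaussRate t) (deriv^[k] (u t)))) := by
  have hs : 0 ≤ 1 + t := by linarith
  have hrate := mul_le_mul_of_nonneg_left (mul_le_mul_of_nonneg_left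
    (localEnergyRate_bump_sq_le (σ := gaussRate t) hR ((hu.iterate_deriv_right k).contDiff_two t)
      (by simpa only [Function.iterate_succ_apply'] using hu.iterate_deriv_mul_succ_zero k ht)) hs)
    (Real.rpow_nonneg hs (3 / 2 - ε + k))
  have hremainder : 0 ≤ (1 + t) ^ (3 / 2 - ε + k) * ((1 + t) * (16 * gaussRate t / R ^ 2 *
      localEnergy (fun z => bump R z * z ^ 2) R (gaussRate t) (deriv^[k] (u t)))) := by
    have := gaussRate_pos ht.le
    have := localEnergy_nonneg (σ := gaussRate t) (f := deriv^[k] (u t)) hR.le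
      fun z hz => mul_nonneg (bump_nonneg hz) (sq_nonneg z)
    positivity
  have hσ := mul_gaussRate (by linarith : -1 < t)
  rw [mul_scaledEnergyRate ht.le, scaledEnergy_succ ht.le, scaledEnergy]
  linear_combination hrate + hremainder + 2 * (1 + t) ^ (3 / 2 - ε + k) *
    localEnergy (fun z => bump R z ^ 2) R (gaussRate t) (deriv^[k] (u t)) * hσ

theorem sum_div_factorial_le {b : ℕ → ℝ} (hb : ∀ k, 0 ≤ b k) (n : ℕ) :
    ∑ k ∈ Finset.range n, ((k + 3) * b (k + 1) - 2 * b (k + 2)) / (k + 1).factorial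
      + 2 * b (n + 1) / n.factorial ≤ 3 * b 1 := by
  induction n with
  | zero => simpa using mul_le_mul_of_nonneg_right (by norm_num : (2 : ℝ) ≤ 3) (hb 1)
  | succ n ih =>
    obtain rfl | hn := n.eq_zero_or_pos
    · norm_num
    have hn' : (1 : ℝ) ≤ n := mod_cast hn
    have hstep : ((n + 3) * b (n + 1) - 2 * b (n + 2)) / (n + 1).factorial
        + 2 * b (n + 2) / (n + 1).factorial ≤ 2 * b (n + 1) / n.factorial := by
      rw [Nat.factorial_succ, ← add_div, div_le_div_iff₀ (by positivity) (by positivity)]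
      push_cast
      nlinarith [mul_nonneg (mul_nonneg (sub_nonneg.2 hn') (hb (n + 1)))
        (Nat.cast_nonneg (α := ℝ) n.factorial)]
    rw [Finset.sum_range_succ]
    linarith

end Lyapunov

section WeightedNorm

variable {f : ℝ → ℝ} {R t : ℝ}

theorem L2muSq_one (t : ℝ) (f : ℝ → ℝ) :
    L2muSq 1 t f = ∫⁻ z in Ioi 0, ENNReal.ofReal (Real.exp (gaussRate t * z ^ 2) * f z ^ 2) := by
  have hmu (z : ℝ) : mu 1 t z = Real.exp (gaussRate t * z ^ 2) := by
    unfold mu gaussRate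
    ring_nf
  simp only [L2muSq, hmu]

theorem continuous_gaussian_mul_sq (σ : ℝ) (hf : Continuous f) :
    Continuous fun z => Real.exp (σ * z ^ 2) * f z ^ 2 := by
  fun_prop

theorem localEnergy_one_eq_setIntegral (hR : 0 ≤ R) (σ : ℝ) (f : ℝ → ℝ) :
    localEnergy 1 R σ f = ∫ z in Ioc 0 R, Real.exp (σ * z ^ 2) * f z ^ 2 := by
  simp only [localEnergy, Pi.one_apply, one_mul, intervalIntegral.integral_of_le hR]

theorem ofReal_localEnergy_one_le_L2muSq (hf : Continuous f) (hR : 0 ≤ R) :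
    ENNReal.ofReal (localEnergy 1 R (gaussRate t) f) ≤ L2muSq 1 t f := by
  rw [localEnergy_one_eq_setIntegral hR, L2muSq_one, ofReal_integral_eq_lintegral_ofReal
    ((continuous_gaussian_mul_sq _ hf).integrableOn_Icc.mono_set Ioc_subset_Icc_self)
    (.of_forall fun z => by positivity)]
  exact lintegral_mono_set Ioc_subset_Ioi_self

theorem integrableOn_of_L2muSq_ne_top (hf : Continuous f) (h : L2muSq 1 t f ≠ ⊤) :
    IntegrableOn (fun z => Real.exp (gaussRate t * z ^ 2) * f z ^ 2) (Ioi 0) :=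
  (lintegral_ofReal_ne_top_iff_integrable (continuous_gaussian_mul_sq _ hf).aestronglyMeasurable
    (.of_forall fun z => by positivity)).1 (L2muSq_one t f ▸ h)

theorem ofReal_integral_eq_L2muSq
    (h : IntegrableOn (fun z => Real.exp (gaussRate t * z ^ 2) * f z ^ 2) (Ioi 0)) :
    ENNReal.ofReal (∫ z in Ioi 0, Real.exp (gaussRate t * z ^ 2) * f z ^ 2) = L2muSq 1 t f := by
  rw [L2muSq_one, ofReal_integral_eq_lintegral_ofReal h (.of_forall fun z => by positivity)]

theorem L2muSq_le_of_localEnergy_one_le (hf : Continuous f) {C : ℝ}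
    (h : ∀ R > 0, localEnergy 1 R (gaussRate t) f ≤ C) : L2muSq 1 t f ≤ ENNReal.ofReal C := by
  have hlocal : ∀ᶠ R in atTop, ∫ z in (0 : ℝ)..R, Real.exp (gaussRate t * z ^ 2) * f z ^ 2 ≤ C := by
    filter_upwards [eventually_gt_atTop 0] with R hR
    simpa only [localEnergy, Pi.one_apply, one_mul] using h R hR
  have hint : IntegrableOn (fun z => Real.exp (gaussRate t * z ^ 2) * f z ^ 2) (Ioi 0) := by
    refine integrableOn_Ioi_of_intervalIntegral_norm_bounded C 0 (fun R =>
      (continuous_gaussian_mul_sq _ hf).integrableOn_Icc.mono_set Ioc_subset_Icc_self) tendsto_id ?_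
    filter_upwards [hlocal] with R hR
    simpa only [Real.norm_of_nonneg (mul_nonneg (Real.exp_nonneg _) (sq_nonneg _)), id] using hR
  rw [← ofReal_integral_eq_L2muSq hint]
  exact ENNReal.ofReal_le_ofReal
    (le_of_tendsto (intervalIntegral_tendsto_integral_Ioi 0 hint tendsto_id) hlocal)

theorem L2muSq_iterate_deriv_le_HmuSq {n k : ℕ} (hk : k ≤ n) (lam t : ℝ) (f : ℝ → ℝ) :
    L2muSq lam t (deriv^[k] f) ≤ HmuSq n lam t f :=
  Finset.single_le_sum (f := fun i => L2muSq lam t (deriv^[i] f)) (fun _ _ => zero_le)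
    (Finset.mem_range_succ_iff.2 hk)

theorem localEnergy_one_le_of_bump_sq_le {σ C K : ℝ} (hf : Continuous f)
    (h : ∀ r > 0, localEnergy (fun z => bump r z ^ 2) r σ f ≤ C + K / r ^ 2) (hR : 0 < R) :
    localEnergy 1 R σ f ≤ C := by
  have hlower : ∀ᶠ r in atTop, bump r R ^ 2 * localEnergy 1 R σ f ≤ C + K / r ^ 2 := by
    filter_upwards [eventually_ge_atTop R] with r hr
    have cb := continuous_bump (R := r)
    have hr₀ : 0 < r := hR.trans_le hr
    refine le_trans ?_ (h r hr₀)
    calc bump r R ^ 2 * localEnergy 1 R σ f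
        ≤ localEnergy (fun z => bump r z ^ 2) R σ f := by
          rw [localEnergy, ← intervalIntegral.integral_const_mul]
          refine intervalIntegral.integral_mono_on hR.le
            (Continuous.intervalIntegrable (by simp only [Pi.one_apply]; fun_prop) 0 R)
            (Continuous.intervalIntegrable (by fun_prop) 0 R) fun z hz => ?_
          have hbump : bump r R ≤ bump r z :=
            sub_le_sub_left (by have := hz.1; have := hz.2; gcongr) 1
          have := bump_nonneg (R := r) ⟨hR.le, hr⟩
          simp only [Pi.one_apply, one_mul]
          gcongr
      _ ≤ localEnergy (fun z => bump r z ^ 2) r σ f :=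
          intervalIntegral.integral_mono_interval le_rfl hR.le hr
            (.of_forall fun z => by simp only [Pi.zero_apply]; positivity)
            (Continuous.intervalIntegrable (by fun_prop) 0 r)
  have hsmall (a : ℝ) : Tendsto (fun r : ℝ => a / r ^ 2) atTop (𝓝 0) :=
    tendsto_const_nhds.div_atTop (tendsto_pow_atTop two_ne_zero)
  simpa using le_of_tendsto_of_tendsto ((((hsmall (R ^ 2)).const_sub 1).pow 2).mul_const _)
    ((hsmall K).const_add C) hlower

end WeightedNorm

section Decay

variable {u : ℝ → ℝ → ℝ} {R T t ε : ℝ}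

/-- The Lyapunov functional of a Dirichlet heat flow: scaled energies of the first `n` derivatives,
with weights small enough for the dissipation of each to absorb the growth of the next. -/
def lyapunov (u : ℝ → ℝ → ℝ) (ε R : ℝ) (n : ℕ) (t : ℝ) : ℝ :=
  scaledEnergy u ε R 0 t
    + ε / 3 * ∑ k ∈ Finset.range n, scaledEnergy u ε R (k + 1) t / (k + 1).factorial

/-- The time derivative of `lyapunov u ε R n` along a heat flow. -/
def lyapunovRate (u : ℝ → ℝ → ℝ) (ε R : ℝ) (n : ℕ) (t : ℝ) : ℝ :=
  scaledEnergyRate u ε R 0 t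
    + ε / 3 * ∑ k ∈ Finset.range n, scaledEnergyRate u ε R (k + 1) t / (k + 1).factorial

theorem IsHeatFlow.hasDerivAt_lyapunov (hu : IsHeatFlow u) (hR : 0 ≤ R) (ht : 0 ≤ t) (n : ℕ) :
    HasDerivAt (lyapunov u ε R n) (lyapunovRate u ε R n t) t :=
  (hu.hasDerivAt_scaledEnergy hR ht 0).add ((HasDerivAt.fun_sum fun k _ =>
    (hu.hasDerivAt_scaledEnergy hR ht (k + 1)).div_const _).const_mul _)

theorem IsDirichletHeatFlow.scaledEnergyRate_div_factorial_le (hu : IsDirichletHeatFlow u)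
    (hε₀ : 0 ≤ ε) (hR : 0 < R) (ht : 0 < t) {k : ℕ} {D : ℝ} (hD₀ : 0 ≤ D)
    (hD : (1 + t) ^ (3 / 2 - ε + k)
      * (8 / R ^ 2 * localEnergy 1 R (gaussRate t) (deriv^[k] (u t))) ≤ D) :
    (1 + t) * (scaledEnergyRate u ε R k t / k.factorial)
      ≤ ((k + 2) * scaledEnergy u ε R k t - 2 * scaledEnergy u ε R (k + 1) t) / k.factorial
        + (1 + t) * D := by
  have hs : 0 < 1 + t := by linarith
  have herror : (1 + t) * D / k.factorial ≤ (1 + t) * D :=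
    div_le_self (by positivity) (mod_cast k.factorial_pos)
  rw [mul_div_assoc']
  refine (div_le_div_of_nonneg_right ?_ (Nat.cast_nonneg _)).trans
    ((add_div _ _ _).trans_le (add_le_add_right herror _))
  linear_combination hu.scaledEnergyRate_le (ε := ε) hR ht k + mul_le_mul_of_nonneg_left hD hs.le
    + ε * scaledEnergy_nonneg (u := u) (ε := ε) hR.le ht.le k

theorem IsDirichletHeatFlow.lyapunovRate_le (hu : IsDirichletHeatFlow u) (hε₀ : 0 ≤ ε)
    (hε₁ : ε ≤ 1) (hR : 0 < R) (ht : 0 < t) {n : ℕ} {D : ℝ} (hD : ∀ k ≤ n, (1 + t) ^ (3 / 2 - ε + k)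
      * (8 / R ^ 2 * localEnergy 1 R (gaussRate t) (deriv^[k] (u t))) ≤ D) :
    lyapunovRate u ε R n t ≤ (n + 1) * D := by
  have hs : 0 < 1 + t := by linarith
  have hB (k : ℕ) : 0 ≤ scaledEnergy u ε R k t := scaledEnergy_nonneg hR.le ht.le k
  have hD₀ : 0 ≤ D := (hD 0 n.zero_le).trans' <| mul_nonneg (by positivity) <|
    mul_nonneg (by positivity) (localEnergy_one_nonneg hR.le)
  have hzero : (1 + t) * scaledEnergyRate u ε R 0 t
      ≤ -ε * scaledEnergy u ε R 1 t + (1 + t) * D := by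
    have := mul_le_mul_of_nonneg_left (hD 0 n.zero_le) hs.le
    simp only [Nat.cast_zero, add_zero, Function.iterate_zero_apply] at this
    linear_combination hu.scaledEnergyRate_zero_le hε₀ hε₁ hR ht.le + this
  have hsucc (k : ℕ) (hk : k ∈ Finset.range n) :
      (1 + t) * (scaledEnergyRate u ε R (k + 1) t / (k + 1).factorial)
        ≤ ((k + 3) * scaledEnergy u ε R (k + 1) t - 2 * scaledEnergy u ε R (k + 2) t)
          / (k + 1).factorial + (1 + t) * D := by
    convert hu.scaledEnergyRate_div_factorial_le hε₀ hR ht hD₀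
      (hD (k + 1) (Finset.mem_range.1 hk)) using 5
    push_cast
    ring
  have hsum := mul_le_mul_of_nonneg_left (Finset.sum_le_sum hsucc) (by positivity : 0 ≤ ε / 3)
  rw [← Finset.mul_sum, Finset.sum_add_distrib, Finset.sum_const, Finset.card_range,
    nsmul_eq_mul] at hsum
  have habsorb := mul_le_mul_of_nonneg_left (sum_div_factorial_le hB n)
    (by positivity : 0 ≤ ε / 3)
  have hlast : 0 ≤ ε / 3 * (2 * scaledEnergy u ε R (n + 1) t / n.factorial) := by
    have := hB (n + 1)
    positivity
  have herror : ε / 3 * (n * ((1 + t) * D)) ≤ n * ((1 + t) * D) :=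
    mul_le_of_le_one_left (by positivity) (by linarith)
  refine le_of_mul_le_mul_left ?_ hs
  rw [lyapunovRate]
  linear_combination hzero + hsum + habsorb + hlast + herror

theorem mul_scaledEnergy_le_lyapunov (hε₀ : 0 ≤ ε) (hε₁ : ε ≤ 1) (hR : 0 ≤ R) (ht : 0 ≤ t)
    {k n : ℕ} (hk : k ≤ n) :
    ε / 3 / k.factorial * scaledEnergy u ε R k t ≤ lyapunov u ε R n t := by
  have hB (k : ℕ) : 0 ≤ scaledEnergy u ε R k t := scaledEnergy_nonneg hR ht k
  have hterm (j : ℕ) : 0 ≤ scaledEnergy u ε R (j + 1) t / (j + 1).factorial :=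
    div_nonneg (hB _) (Nat.cast_nonneg _)
  obtain _ | k := k
  · rw [Nat.factorial_zero, Nat.cast_one, div_one]
    exact (mul_le_of_le_one_left (hB 0) (by linarith)).trans <| le_add_of_nonneg_right <|
      mul_nonneg (by positivity) (Finset.sum_nonneg fun j _ => hterm j)
  · calc ε / 3 / (k + 1).factorial * scaledEnergy u ε R (k + 1) t
        = ε / 3 * (scaledEnergy u ε R (k + 1) t / (k + 1).factorial) := by ring
      _ ≤ ε / 3 * ∑ j ∈ Finset.range n, scaledEnergy u ε R (j + 1) t / (j + 1).factorial := by
          gcongr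
          exact Finset.single_le_sum (f := fun j => scaledEnergy u ε R (j + 1) t
            / (j + 1).factorial) (fun j _ => hterm j) (Finset.mem_range.2 hk)
      _ ≤ lyapunov u ε R n t := le_add_of_nonneg_left (hB 0)

theorem scaledEnergy_zero_le (hu : ContDiff ℝ ∞ (u 0)) (hR : 0 ≤ R) (k : ℕ) :
    scaledEnergy u ε R k 0 ≤ localEnergy 1 R (gaussRate 0) (deriv^[k] (u 0)) := by
  have cf := (hu.iterate_deriv k).continuous
  have cb := continuous_bump (R := R)
  rw [scaledEnergy, add_zero, Real.one_rpow, one_mul]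
  refine intervalIntegral.integral_mono_on hR (Continuous.intervalIntegrable (by fun_prop) 0 R)
    (Continuous.intervalIntegrable (by simp only [Pi.one_apply]; fun_prop) 0 R) fun z hz => ?_
  exact mul_le_mul_of_nonneg_right (pow_le_one₀ (bump_nonneg hz) (bump_le_one z)) (by positivity)

theorem lyapunov_zero_le (hu : ContDiff ℝ ∞ (u 0)) (hε₁ : ε ≤ 1) (hR : 0 ≤ R)
    (n : ℕ) : lyapunov u ε R n 0
      ≤ ∑ k ∈ Finset.range (n + 1), localEnergy 1 R (gaussRate 0) (deriv^[k] (u 0)) := by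
  rw [Finset.sum_range_succ', add_comm]
  refine add_le_add (scaledEnergy_zero_le hu hR 0) ?_
  calc ε / 3 * ∑ k ∈ Finset.range n, scaledEnergy u ε R (k + 1) 0 / (k + 1).factorial
      ≤ 1 * ∑ k ∈ Finset.range n, scaledEnergy u ε R (k + 1) 0 / (k + 1).factorial :=
        mul_le_mul_of_nonneg_right (by linarith) <| Finset.sum_nonneg fun k _ =>
          div_nonneg (scaledEnergy_nonneg hR le_rfl _) (Nat.cast_nonneg _)
    _ ≤ ∑ k ∈ Finset.range n, localEnergy 1 R (gaussRate 0) (deriv^[k + 1] (u 0)) := by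
        rw [one_mul]
        exact Finset.sum_le_sum fun k _ => (div_le_self (scaledEnergy_nonneg hR le_rfl _)
          (mod_cast (k + 1).factorial_pos)).trans (scaledEnergy_zero_le hu hR _)

theorem IsDirichletHeatFlow.lyapunov_le (hu : IsDirichletHeatFlow u) (hε₀ : 0 ≤ ε) (hε₁ : ε ≤ 1)
    (hR : 0 < R) (hT : 0 ≤ T) {n : ℕ} {M : ℝ}
    (hM : ∀ t ∈ Icc 0 T, ∀ k ≤ n, localEnergy 1 R (gaussRate t) (deriv^[k] (u t)) ≤ M) :
    lyapunov u ε R n T ≤ lyapunov u ε R n 0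
      + (n + 1) * ((1 + T) ^ (3 / 2 - ε + n) * (8 * M)) * T / R ^ 2 := by
  have hderiv (t : ℝ) (ht : 0 ≤ t) := hu.hasDerivAt_lyapunov (ε := ε) hR.le ht n
  have hrate (t : ℝ) (ht : t ∈ interior (Icc 0 T)) : deriv (lyapunov u ε R n) t
      ≤ (n + 1) * ((1 + T) ^ (3 / 2 - ε + n) * (8 * M)) / R ^ 2 := by
    rw [interior_Icc] at ht
    rw [(hderiv t ht.1.le).deriv, mul_div_assoc, mul_div_assoc]
    refine hu.lyapunovRate_le hε₀ hε₁ hR ht.1 fun k hk => ?_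
    have hs : 1 ≤ 1 + t := by linarith [ht.1]
    have hk' : (k : ℝ) ≤ n := mod_cast hk
    rw [mul_div_right_comm 8 M]
    refine mul_le_mul ?_ (mul_le_mul_of_nonneg_left
      (hM t (Ioo_subset_Icc_self ht) k hk) (by positivity))
      (mul_nonneg (by positivity) (localEnergy_one_nonneg hR.le)) (by positivity)
    calc (1 + t) ^ (3 / 2 - ε + k) ≤ (1 + t) ^ (3 / 2 - ε + n) := by gcongr
      _ ≤ (1 + T) ^ (3 / 2 - ε + n) := by
        have := ht.2
        gcongr
        linarith [n.cast_nonneg (α := ℝ)]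
  have hmean := (convex_Icc 0 T).image_sub_le_mul_sub_of_deriv_le
    (fun t ht => (hderiv t ht.1).continuousAt.continuousWithinAt)
    (fun t ht => (hderiv t (interior_subset ht).1).differentiableAt.differentiableWithinAt) hrate
    0 (left_mem_Icc.2 hT) T (right_mem_Icc.2 hT) hT
  linear_combination hmean

theorem IsDirichletHeatFlow.localEnergy_iterate_deriv_le (hu : IsDirichletHeatFlow u)
    (hε₀ : 0 < ε) (hε₁ : ε ≤ 1) (hT : 0 ≤ T) {n k : ℕ} (hk : k ≤ n) {M E : ℝ}
    (hM : ∀ t ∈ Icc 0 T, ∀ R > 0, ∀ j ≤ n,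
      localEnergy 1 R (gaussRate t) (deriv^[j] (u t)) ≤ M)
    (hE : ∀ R > 0, ∑ j ∈ Finset.range (n + 1),
      localEnergy 1 R (gaussRate 0) (deriv^[j] (u 0)) ≤ E) (hR : 0 < R) :
    localEnergy 1 R (gaussRate T) (deriv^[k] (u T))
      ≤ 3 * k.factorial / ε * (1 + T) ^ (-(3 / 2 - ε + k)) * E := by
  set A := 3 * k.factorial / ε * (1 + T) ^ (-(3 / 2 - ε + k))
  set K := (n + 1) * ((1 + T) ^ (3 / 2 - ε + n) * (8 * M)) * T
  refine localEnergy_one_le_of_bump_sq_le (K := A * K)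
    ((hu.smooth_right T).iterate_deriv k).continuous (fun r hr => ?_) hR
  have hbound : ε / 3 / k.factorial * scaledEnergy u ε r k T ≤ E + K / r ^ 2 :=
    calc ε / 3 / k.factorial * scaledEnergy u ε r k T
        ≤ lyapunov u ε r n T := mul_scaledEnergy_le_lyapunov hε₀.le hε₁ hr.le hT hk
      _ ≤ lyapunov u ε r n 0 + K / r ^ 2 :=
          hu.lyapunov_le hε₀.le hε₁ hr hT fun t ht => hM t ht r hr
      _ ≤ E + K / r ^ 2 := by
          gcongr
          exact (lyapunov_zero_le (hu.smooth_right 0) hε₁ hr.le n).trans (hE r hr)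
  have hs : 0 < 1 + T := by linarith
  have hcancel : A * (ε / 3 / k.factorial * (1 + T) ^ (3 / 2 - ε + k)) = 1 := by
    simp only [A, Real.rpow_neg hs.le]
    field_simp
  calc localEnergy (fun z => bump r z ^ 2) r (gaussRate T) (deriv^[k] (u T))
      = A * (ε / 3 / k.factorial * scaledEnergy u ε r k T) := by
        rw [scaledEnergy, ← mul_assoc (ε / 3 / k.factorial : ℝ), ← mul_assoc A, hcancel, one_mul]
    _ ≤ A * (E + K / r ^ 2) := by gcongr
    _ = A * E + A * K / r ^ 2 := by ring

theorem IsDirichletHeatFlow.L2muSq_iterate_deriv_le (hu : IsDirichletHeatFlow u)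
    (hε₀ : 0 < ε) (hε₁ : ε ≤ 1) (hT : 0 ≤ T) {n k : ℕ} (hk : k ≤ n) {M : ENNReal} (hM_top : M ≠ ⊤)
    (hM : ∀ t ∈ Icc 0 T, HmuSq n 1 t (u t) ≤ M) :
    L2muSq 1 T (deriv^[k] (u T))
      ≤ ENNReal.ofReal (3 * k.factorial / ε * (1 + T) ^ (-(3 / 2 - ε + k)))
        * HmuSq n 1 0 (u 0) := by
  have cu (t : ℝ) (j : ℕ) : Continuous (deriv^[j] (u t)) :=
    ((hu.smooth_right t).iterate_deriv j).continuous
  have hfinite : HmuSq n 1 0 (u 0) ≠ ⊤ := ne_top_of_le_ne_top hM_top (hM 0 (left_mem_Icc.2 hT))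
  rw [← ENNReal.ofReal_toReal hfinite, ← ENNReal.ofReal_mul (by positivity)]
  refine L2muSq_le_of_localEnergy_one_le (cu T k) fun R hR =>
    hu.localEnergy_iterate_deriv_le hε₀ hε₁ hT hk (M := M.toReal) (fun t ht r hr j hj => ?_)
      (fun r hr => ?_) hR
  · rw [← ENNReal.ofReal_le_iff_le_toReal hM_top]
    calc ENNReal.ofReal (localEnergy 1 r (gaussRate t) (deriv^[j] (u t)))
        ≤ L2muSq 1 t (deriv^[j] (u t)) := ofReal_localEnergy_one_le_L2muSq (cu t j) hr.le
      _ ≤ HmuSq n 1 t (u t) := L2muSq_iterate_deriv_le_HmuSq hj 1 t (u t)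
      _ ≤ M := hM t ht
  · rw [← ENNReal.ofReal_le_iff_le_toReal hfinite, ENNReal.ofReal_sum_of_nonneg
      fun j _ => localEnergy_one_nonneg hr.le]
    exact Finset.sum_le_sum fun j _ => ofReal_localEnergy_one_le_L2muSq (cu 0 j) hr.le

end Decay

section Pointwise

variable {f : ℝ → ℝ} {r z t : ℝ}

theorem gaussian_mul_sq_sub_le_integral {σ R : ℝ} (hσ : 0 ≤ σ) (hr : 0 < r) (hf : ContDiff ℝ 1 f)
    (hz : 0 ≤ z) (hR : z ≤ R) :
    Real.exp (σ * z ^ 2) * f z ^ 2 - Real.exp (σ * R ^ 2) * f R ^ 2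
      ≤ ∫ y in z..R, (r * (Real.exp (σ * y ^ 2) * f y ^ 2)
        + Real.exp (σ * y ^ 2) * deriv f y ^ 2 / r) := by
  have cf := hf.continuous
  have key := intervalIntegral.sub_le_integral_of_hasDeriv_right_of_le
    (g := fun y => -(Real.exp (σ * y ^ 2) * f y ^ 2)) hR (by fun_prop)
    (fun y _ => ((hasDerivAt_gaussian σ y).mul
      (((hf.differentiable one_ne_zero y).hasDerivAt).fun_pow 2)).neg.hasDerivWithinAt)
    (φ := fun y => r * (Real.exp (σ * y ^ 2) * f y ^ 2) + Real.exp (σ * y ^ 2) * deriv f y ^ 2 / r)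
    (Continuous.integrableOn_Icc (by fun_prop)) fun y hy => ?_
  · linarith
  · have hy₀ : 0 ≤ y := hz.trans hy.1.le
    have hsquare : 0 ≤ Real.exp (σ * y ^ 2) * ((r * f y + deriv f y) ^ 2 / r) := by positivity
    have hgrowth : 0 ≤ 2 * σ * y * Real.exp (σ * y ^ 2) * f y ^ 2 := by positivity
    have hexpand : (r * f y + deriv f y) ^ 2 / r
        = r * f y ^ 2 + 2 * f y * deriv f y + deriv f y ^ 2 / r := by
      field_simp
      ring
    rw [hexpand] at hsquare
    push_cast
    linear_combination hsquare + hgrowth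

theorem gaussian_mul_sq_le_integral {σ : ℝ} (hσ : 0 ≤ σ) (hr : 0 < r) (hf : ContDiff ℝ 1 f)
    (hint : IntegrableOn (fun y => Real.exp (σ * y ^ 2) * f y ^ 2) (Ioi 0))
    (hint' : IntegrableOn (fun y => Real.exp (σ * y ^ 2) * deriv f y ^ 2) (Ioi 0)) (hz : 0 ≤ z) :
    Real.exp (σ * z ^ 2) * f z ^ 2 ≤ r * (∫ y in Ioi 0, Real.exp (σ * y ^ 2) * f y ^ 2)
      + (∫ y in Ioi 0, Real.exp (σ * y ^ 2) * deriv f y ^ 2) / r := by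
  rw [← integral_const_mul, ← integral_div, ← integral_add (hint.const_mul r) (hint'.div_const r)]
  by_contra! hlt
  set φ : ℝ → ℝ := fun y =>
    r * (Real.exp (σ * y ^ 2) * f y ^ 2) + Real.exp (σ * y ^ 2) * deriv f y ^ 2 / r
  have hlower (R : ℝ) (hR : R ∈ Ioi z) :
      Real.exp (σ * z ^ 2) * f z ^ 2 - ∫ y in Ioi 0, φ y ≤ Real.exp (σ * R ^ 2) * f R ^ 2 := by
    have hmono : ∫ y in z..R, φ y ≤ ∫ y in Ioi 0, φ y := by
      rw [intervalIntegral.integral_of_le (le_of_lt hR)]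
      exact setIntegral_mono_set ((hint.const_mul r).add (hint'.div_const r))
        (.of_forall fun y => by simp only [φ, Pi.zero_apply]; positivity)
        (Ioc_subset_Ioi_self.trans (Ioi_subset_Ioi hz)).eventuallyLE
    linarith [gaussian_mul_sq_sub_le_integral hσ hr hf hz (le_of_lt hR)]
  have hconst : IntegrableOn (fun _ => Real.exp (σ * z ^ 2) * f z ^ 2 - ∫ y in Ioi 0, φ y)
      (Ioi z) := by
    refine (hint.mono_set (Ioi_subset_Ioi hz)).mono' aestronglyMeasurable_const ?_
    filter_upwards [ae_restrict_mem measurableSet_Ioi] with R hR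
    rw [Real.norm_of_nonneg (sub_pos.2 hlt).le]
    exact hlower R hR
  rw [integrableOn_const_iff, Real.volume_Ioi] at hconst
  simp [(sub_pos.2 hlt).ne'] at hconst

theorem ofReal_gaussian_mul_sq_le (ht : 0 ≤ t) (hr : 0 < r) (hf : ContDiff ℝ 1 f) (hz : 0 ≤ z) :
    ENNReal.ofReal (Real.exp (gaussRate t * z ^ 2) * f z ^ 2)
      ≤ ENNReal.ofReal r * L2muSq 1 t f + ENNReal.ofReal r⁻¹ * L2muSq 1 t (deriv f) := by
  obtain hf_top | hf_top := eq_or_ne (L2muSq 1 t f) ⊤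
  · simp [hf_top, hr]
  obtain hf'_top | hf'_top := eq_or_ne (L2muSq 1 t (deriv f)) ⊤
  · simp [hf'_top, hr]
  have hint := integrableOn_of_L2muSq_ne_top hf.continuous hf_top
  have hint' := integrableOn_of_L2muSq_ne_top (hf.continuous_deriv le_rfl) hf'_top
  rw [← ofReal_integral_eq_L2muSq hint, ← ofReal_integral_eq_L2muSq hint',
    ← ENNReal.ofReal_mul hr.le, ← ENNReal.ofReal_mul (by positivity), ← ENNReal.ofReal_add
      (by positivity) (by positivity), inv_mul_eq_div]
  exact ENNReal.ofReal_le_ofReal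
    (gaussian_mul_sq_le_integral (gaussRate_pos ht).le hr hf hint hint' hz)

end Pointwise

/-- The primitive of `g` that vanishes at infinity. Basing the variable integral at `0` makes it
differentiable on the whole line. -/
def tailPrimitive (g : ℝ → ℝ) (z : ℝ) : ℝ := (∫ y in (0 : ℝ)..z, g y) - ∫ y in Ioi 0, g y

section Hardy

variable {g : ℝ → ℝ} {σ R : ℝ}

theorem hasDerivAt_tailPrimitive (hg : Continuous g) (z : ℝ) :
    HasDerivAt (tailPrimitive g) (g z) z :=
  (hg.integral_hasStrictDerivAt 0 z).hasDerivAt.sub_const _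

theorem deriv_tailPrimitive (hg : Continuous g) : deriv (tailPrimitive g) = g :=
  funext fun z => (hasDerivAt_tailPrimitive hg z).deriv

theorem continuous_tailPrimitive (hg : Continuous g) : Continuous (tailPrimitive g) :=
  continuous_iff_continuousAt.2 fun z => (hasDerivAt_tailPrimitive hg z).continuousAt

theorem contDiff_tailPrimitive (hg : ContDiff ℝ ∞ g) : ContDiff ℝ ∞ (tailPrimitive g) :=
  contDiff_infty_iff_deriv.2 ⟨fun z => (hasDerivAt_tailPrimitive hg.continuous z).differentiableAt,
    (deriv_tailPrimitive hg.continuous).symm ▸ hg⟩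

theorem exp_mul_exp_neg_mul_sq (σ y : ℝ) :
    Real.exp (σ * y ^ 2) * Real.exp (-σ * y ^ 2) = 1 := by
  rw [← Real.exp_add, neg_mul, add_neg_cancel, Real.exp_zero]

theorem integral_Ioi_exp_neg_mul_sq_le (hσ : 0 < σ) (hR : 0 < R) :
    ∫ y in Ioi R, Real.exp (-σ * y ^ 2) ≤ Real.exp (-σ * R ^ 2) / (2 * σ * R) := by
  have hderiv (y : ℝ) : HasDerivAt (fun y => -(Real.exp (-σ * y ^ 2) / (2 * σ * R)))
      (y / R * Real.exp (-σ * y ^ 2)) y :=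
    ((hasDerivAt_gaussian (-σ) y).div_const _).neg.congr_deriv (by field_simp)
  have hint : IntegrableOn (fun y => y / R * Real.exp (-σ * y ^ 2)) (Ioi R) := by
    simpa only [mul_div_right_comm]
      using ((integrable_mul_exp_neg_mul_sq hσ).div_const R).integrableOn
  have hlim : Tendsto (fun y => -(Real.exp (-σ * y ^ 2) / (2 * σ * R))) atTop (𝓝 0) := by
    have hexp := Real.tendsto_exp_atBot.comp
      ((tendsto_pow_atTop two_ne_zero).const_mul_atTop_of_neg (neg_lt_zero.2 hσ))
    simpa using (hexp.div_const (2 * σ * R)).neg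
  calc ∫ y in Ioi R, Real.exp (-σ * y ^ 2)
      ≤ ∫ y in Ioi R, y / R * Real.exp (-σ * y ^ 2) :=
        setIntegral_mono_on (integrable_exp_neg_mul_sq hσ).integrableOn hint measurableSet_Ioi
          fun y hy => le_mul_of_one_le_left (Real.exp_nonneg _) ((one_le_div hR).2 (le_of_lt hy))
    _ = Real.exp (-σ * R ^ 2) / (2 * σ * R) := by
        rw [integral_Ioi_of_hasDerivAt_of_tendsto' (fun y _ => hderiv y) hint hlim]
        ring

theorem integrableOn_pow_mul_of_gaussian (hσ : 0 < σ) (hg : Continuous g)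
    (hint : IntegrableOn (fun y => Real.exp (σ * y ^ 2) * g y ^ 2) (Ioi 0)) (n : ℕ) :
    IntegrableOn (fun y => y ^ n * g y) (Ioi 0) := by
  have hmoment : IntegrableOn (fun y : ℝ => (y ^ n) ^ 2 * Real.exp (-σ * y ^ 2)) (Ioi 0) := by
    simpa only [Real.rpow_natCast, pow_mul'] using integrableOn_rpow_mul_exp_neg_mul_sq hσ
      (neg_one_lt_zero.trans_le (Nat.cast_nonneg (2 * n)))
  refine (hint.add hmoment).mono' (by fun_prop) (.of_forall fun y => ?_)
  have hsquare : 0 ≤ Real.exp (σ * y ^ 2) * (|g y| - |y ^ n| * Real.exp (-σ * y ^ 2)) ^ 2 := by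
    positivity
  have hproduct := mul_nonneg (abs_nonneg (y ^ n)) (abs_nonneg (g y))
  rw [Real.norm_eq_abs, abs_mul, Pi.add_apply, ← sq_abs (g y), ← sq_abs (y ^ n)]
  linear_combination hsquare + hproduct +
    (|y ^ n| ^ 2 * Real.exp (-σ * y ^ 2) - 2 * |y ^ n| * |g y|) * exp_mul_exp_neg_mul_sq σ y

theorem sq_integral_Ioi_le (hσ : 0 < σ) (hg : IntegrableOn g (Ioi R))
    (hint : IntegrableOn (fun y => Real.exp (σ * y ^ 2) * g y ^ 2) (Ioi R)) :
    (∫ y in Ioi R, g y) ^ 2 ≤ (∫ y in Ioi R, Real.exp (σ * y ^ 2) * g y ^ 2)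
      * ∫ y in Ioi R, Real.exp (-σ * y ^ 2) := by
  have hquadratic (x : ℝ) : 0 ≤ (∫ y in Ioi R, Real.exp (σ * y ^ 2) * g y ^ 2) * (x * x)
      + 2 * (∫ y in Ioi R, g y) * x + ∫ y in Ioi R, Real.exp (-σ * y ^ 2) := by
    have hgauss := (integrable_exp_neg_mul_sq hσ).integrableOn (s := Ioi R)
    have hint' := hint.const_mul (x * x)
    have hg' := hg.const_mul (2 * x)
    have hsum : Integrable (fun y => x * x * (Real.exp (σ * y ^ 2) * g y ^ 2) + 2 * x * g y)
      (volume.restrict (Ioi R)) := hint'.add hg'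
    calc 0 ≤ ∫ y in Ioi R, Real.exp (σ * y ^ 2) * (x * g y + Real.exp (-σ * y ^ 2)) ^ 2 :=
          integral_nonneg fun y => by positivity
      _ = ∫ y in Ioi R, (x * x * (Real.exp (σ * y ^ 2) * g y ^ 2) + 2 * x * g y
            + Real.exp (-σ * y ^ 2)) :=
          integral_congr_ae <| .of_forall fun y => by
            linear_combination (2 * x * g y + Real.exp (-σ * y ^ 2)) * exp_mul_exp_neg_mul_sq σ y
      _ = _ := by
          rw [integral_add hsum hgauss, integral_add hint' hg', integral_const_mul,
            integral_const_mul]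
          ring
  have hdiscrim := discrim_le_zero hquadratic
  rw [discrim] at hdiscrim
  linarith

theorem mul_gaussian_mul_tailPrimitive_sq_le (hσ : 0 < σ) (hg : Continuous g)
    (hint : IntegrableOn (fun y => Real.exp (σ * y ^ 2) * g y ^ 2) (Ioi 0)) (hR : 0 < R) :
    2 * σ * R * Real.exp (σ * R ^ 2) * tailPrimitive g R ^ 2
      ≤ ∫ y in Ioi R, Real.exp (σ * y ^ 2) * g y ^ 2 := by
  have hsub := Ioi_subset_Ioi hR.le
  have hg_int : IntegrableOn g (Ioi 0) := by
    simpa using integrableOn_pow_mul_of_gaussian hσ hg hint 0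
  have htail : tailPrimitive g R = -∫ y in Ioi R, g y := by
    rw [tailPrimitive, ← intervalIntegral.integral_interval_add_Ioi hg_int (hg_int.mono_set hsub),
      sub_add_cancel_left]
  calc 2 * σ * R * Real.exp (σ * R ^ 2) * tailPrimitive g R ^ 2
      ≤ 2 * σ * R * Real.exp (σ * R ^ 2) * ((∫ y in Ioi R, Real.exp (σ * y ^ 2) * g y ^ 2)
        * (Real.exp (-σ * R ^ 2) / (2 * σ * R))) := by
        rw [htail, neg_sq]
        gcongr
        refine (sq_integral_Ioi_le hσ (hg_int.mono_set hsub) (hint.mono_set hsub)).trans ?_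
        exact mul_le_mul_of_nonneg_left (integral_Ioi_exp_neg_mul_sq_le hσ hR)
          (integral_nonneg fun y => by positivity)
    _ = (∫ y in Ioi R, Real.exp (σ * y ^ 2) * g y ^ 2)
        * (Real.exp (σ * R ^ 2) * Real.exp (-σ * R ^ 2)) := by
        field_simp
    _ = ∫ y in Ioi R, Real.exp (σ * y ^ 2) * g y ^ 2 := by
        rw [exp_mul_exp_neg_mul_sq, mul_one]

theorem hasDerivAt_hardyFlux (hg : Continuous g) (z : ℝ) :
    HasDerivAt (fun y => 2 * σ * y * (Real.exp (σ * y ^ 2) * tailPrimitive g y ^ 2))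
      (2 * σ * (Real.exp (σ * z ^ 2) * tailPrimitive g z ^ 2) - Real.exp (σ * z ^ 2) * g z ^ 2
        + Real.exp (σ * z ^ 2) * (g z + 2 * σ * z * tailPrimitive g z) ^ 2) z := by
  refine (((hasDerivAt_id' z).const_mul (2 * σ)).mul ((hasDerivAt_gaussian σ z).mul
    ((hasDerivAt_tailPrimitive hg z).fun_pow 2))).congr_deriv ?_
  simp only [Pi.mul_apply]
  ring

theorem localEnergy_tailPrimitive_le (hσ : 0 < σ) (hg : Continuous g)
    (hint : IntegrableOn (fun y => Real.exp (σ * y ^ 2) * g y ^ 2) (Ioi 0)) (hR : 0 < R) :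
    localEnergy 1 R σ (tailPrimitive g)
      ≤ (∫ y in Ioi 0, Real.exp (σ * y ^ 2) * g y ^ 2) / (2 * σ) := by
  have hG := continuous_tailPrimitive hg
  have key := intervalIntegral.integral_le_sub_of_hasDeriv_right_of_le
    (φ := fun z => 2 * σ * (Real.exp (σ * z ^ 2) * tailPrimitive g z ^ 2)
      - Real.exp (σ * z ^ 2) * g z ^ 2)
    hR.le (by fun_prop) (fun z _ => (hasDerivAt_hardyFlux (σ := σ) hg z).hasDerivWithinAt)
    (Continuous.integrableOn_Icc (by fun_prop))
    fun z _ => le_add_of_nonneg_right (by positivity)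
  rw [intervalIntegral.integral_sub (Continuous.intervalIntegrable (by fun_prop) 0 R)
    (Continuous.intervalIntegrable (by fun_prop) 0 R), intervalIntegral.integral_const_mul] at key
  have hsplit := intervalIntegral.integral_interval_add_Ioi hint
    (hint.mono_set (Ioi_subset_Ioi hR.le))
  have htail := mul_gaussian_mul_tailPrimitive_sq_le hσ hg hint hR
  rw [le_div_iff₀' (by positivity)]
  simp only [localEnergy, Pi.one_apply, one_mul]
  linear_combination key + hsplit + htail

theorem L2muSq_tailPrimitive_le {t : ℝ} (ht : 0 ≤ t) (hg : Continuous g) :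
    L2muSq 1 t (tailPrimitive g) ≤ ENNReal.ofReal (2 * (1 + t)) * L2muSq 1 t g := by
  obtain hg_top | hg_top := eq_or_ne (L2muSq 1 t g) ⊤
  · rw [hg_top, ENNReal.mul_top (ENNReal.ofReal_pos.2 (by positivity)).ne']
    exact le_top
  have hint := integrableOn_of_L2muSq_ne_top hg hg_top
  have hG := continuous_tailPrimitive hg
  refine (L2muSq_le_of_localEnergy_one_le hG fun R hR =>
    localEnergy_tailPrimitive_le (gaussRate_pos ht) hg hint hR).trans_eq ?_
  rw [← ofReal_integral_eq_L2muSq hint, ← ENNReal.ofReal_mul (by positivity), div_eq_inv_mul]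
  congr 2
  unfold gaussRate
  field_simp
  norm_num

theorem integral_tailPrimitive (hσ : 0 < σ) (hg : Continuous g)
    (hint : IntegrableOn (fun y => Real.exp (σ * y ^ 2) * g y ^ 2) (Ioi 0))
    (hint' : IntegrableOn (fun y => Real.exp (σ * y ^ 2) * tailPrimitive g y ^ 2) (Ioi 0)) :
    ∫ y in Ioi 0, tailPrimitive g y = -∫ y in Ioi 0, y * g y := by
  have hG := continuous_tailPrimitive hg
  have hmoment : IntegrableOn (fun y => y * g y) (Ioi 0) := by
    simpa using integrableOn_pow_mul_of_gaussian hσ hg hint 1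
  have hmass : IntegrableOn (tailPrimitive g) (Ioi 0) := by
    simpa using integrableOn_pow_mul_of_gaussian hσ hG hint' 0
  have hderiv (y : ℝ) : HasDerivAt (fun y => y * tailPrimitive g y)
      (tailPrimitive g y + y * g y) y :=
    ((hasDerivAt_id' y).mul (hasDerivAt_tailPrimitive hg y)).congr_deriv (by ring)
  have hlim := tendsto_zero_of_hasDerivAt_of_integrableOn_Ioi (a := 0) (fun y _ => hderiv y)
    (hmass.add hmoment) (by simpa using integrableOn_pow_mul_of_gaussian hσ hG hint' 1)
  have hparts := integral_Ioi_of_hasDerivAt_of_tendsto' (a := 0) (fun y _ => hderiv y)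
    (hmass.add hmoment) hlim
  rw [integral_add hmass hmoment, zero_mul, sub_zero] at hparts
  exact eq_neg_of_add_eq_zero_left hparts

end Hardy

section AprioriBound

variable {t : ℝ}

theorem mu_le_mu {lam τ : ℝ} (hlam : 0 ≤ lam) (hτ : 0 ≤ τ) (hτt : τ ≤ t) (z : ℝ) :
    mu lam t z ≤ mu lam τ z := by
  unfold mu
  gcongr

theorem sq_intervalIntegral_le {f : ℝ → ℝ} (hf : Continuous f) (ht : 0 ≤ t) :
    (∫ τ in (0 : ℝ)..t, f τ) ^ 2 ≤ t * ∫ τ in (0 : ℝ)..t, f τ ^ 2 := by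
  obtain rfl | ht := ht.eq_or_lt
  · simp
  set I := ∫ τ in (0 : ℝ)..t, f τ
  have hvariance : 0 ≤ ∫ τ in (0 : ℝ)..t, (t * f τ - I) ^ 2 :=
    intervalIntegral.integral_nonneg ht.le fun τ _ => sq_nonneg _
  have hexpand : ∫ τ in (0 : ℝ)..t, (t * f τ - I) ^ 2
      = t * (t * (∫ τ in (0 : ℝ)..t, f τ ^ 2) - I ^ 2) := by
    have hint {g : ℝ → ℝ} (hg : Continuous g) := hg.intervalIntegrable (μ := volume) 0 t
    calc ∫ τ in (0 : ℝ)..t, (t * f τ - I) ^ 2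
        = ∫ τ in (0 : ℝ)..t, (t ^ 2 * f τ ^ 2 - 2 * t * I * f τ + I ^ 2) := by
          congr with τ
          ring
      _ = t * (t * (∫ τ in (0 : ℝ)..t, f τ ^ 2) - I ^ 2) := by
          rw [intervalIntegral.integral_add (hint (by fun_prop)) (hint (by fun_prop)),
            intervalIntegral.integral_sub (hint (by fun_prop)) (hint (by fun_prop)),
            intervalIntegral.integral_const_mul, intervalIntegral.integral_const_mul,
            intervalIntegral.integral_const, smul_eq_mul]
          ring
  exact sub_nonneg.1 (nonneg_of_mul_nonneg_right (hexpand ▸ hvariance) ht)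

theorem ofReal_mu_mul_sq_add_integral_le {v : ℝ → ℝ → ℝ} {z : ℝ}
    (hv : Continuous fun τ => v τ z) (ht : 0 ≤ t) (a : ℝ) :
    ENNReal.ofReal (mu 1 t z * (a + ∫ τ in (0 : ℝ)..t, v τ z) ^ 2)
      ≤ 2 * ENNReal.ofReal (mu 1 0 z * a ^ 2)
        + ENNReal.ofReal (2 * t) * ∫⁻ τ in Ioc 0 t, ENNReal.ofReal (mu 1 τ z * v τ z ^ 2) := by
  have hmu : 0 ≤ mu 1 t z := Real.exp_nonneg _
  have hintegral : ENNReal.ofReal (∫ τ in (0 : ℝ)..t, mu 1 t z * v τ z ^ 2)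
      ≤ ∫⁻ τ in Ioc 0 t, ENNReal.ofReal (mu 1 τ z * v τ z ^ 2) := by
    rw [intervalIntegral.integral_of_le ht, ofReal_integral_eq_lintegral_ofReal
      (Continuous.integrableOn_Icc (by fun_prop) |>.mono_set Ioc_subset_Icc_self)
      (.of_forall fun τ => by positivity)]
    refine setLIntegral_mono' measurableSet_Ioc fun τ hτ => ENNReal.ofReal_le_ofReal ?_
    exact mul_le_mul_of_nonneg_right (mu_le_mu zero_le_one hτ.1.le hτ.2 z) (sq_nonneg _)
  calc ENNReal.ofReal (mu 1 t z * (a + ∫ τ in (0 : ℝ)..t, v τ z) ^ 2)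
      ≤ ENNReal.ofReal (2 * (mu 1 0 z * a ^ 2)
          + 2 * t * ∫ τ in (0 : ℝ)..t, mu 1 t z * v τ z ^ 2) := by
        refine ENNReal.ofReal_le_ofReal ?_
        rw [intervalIntegral.integral_const_mul]
        have hCauchySchwarz := mul_le_mul_of_nonneg_left (sq_intervalIntegral_le hv ht) hmu
        have hinitial := mul_le_mul_of_nonneg_right (mu_le_mu zero_le_one le_rfl ht z)
          (sq_nonneg a)
        have hsquare := mul_le_mul_of_nonneg_left
          (add_sq_le (a := a) (b := ∫ τ in (0 : ℝ)..t, v τ z)) hmu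
        linear_combination hsquare + 2 * hinitial + 2 * hCauchySchwarz
    _ ≤ _ := by
        have hmu₀ : 0 ≤ mu 1 0 z := Real.exp_nonneg _
        have hnonneg : 0 ≤ ∫ τ in (0 : ℝ)..t, mu 1 t z * v τ z ^ 2 :=
          intervalIntegral.integral_nonneg ht fun τ _ => by positivity
        rw [ENNReal.ofReal_add (by positivity) (by positivity), ENNReal.ofReal_mul zero_le_two,
          ENNReal.ofReal_ofNat, ENNReal.ofReal_mul (by positivity : 0 ≤ 2 * t)]
        gcongr

theorem L2muSq_add_integral_le {F : ℝ → ℝ} {v : ℝ → ℝ → ℝ} (hF : Continuous F)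
    (hv : Continuous (uncurry v)) (ht : 0 ≤ t) {M : ENNReal}
    (hM : ∀ τ ∈ Icc 0 t, L2muSq 1 τ (v τ) ≤ M) :
    L2muSq 1 t (fun z => F z + ∫ τ in (0 : ℝ)..t, v τ z)
      ≤ 2 * L2muSq 1 0 F + ENNReal.ofReal (2 * t) * (ENNReal.ofReal t * M) := by
  have hleft (z : ℝ) : Continuous fun τ => v τ z := hv.comp (Continuous.prodMk_left z)
  have hinitial : Measurable fun z => 2 * ENNReal.ofReal (mu 1 0 z * F z ^ 2) := by
    unfold mu
    fun_prop
  have hweighted : Measurable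
      (uncurry fun z τ => ENNReal.ofReal (mu 1 τ z * v τ z ^ 2)) := by
    unfold mu uncurry
    fun_prop
  have htonelli : ∫⁻ z in Ioi 0, ∫⁻ τ in Ioc 0 t, ENNReal.ofReal (mu 1 τ z * v τ z ^ 2)
      = ∫⁻ τ in Ioc 0 t, L2muSq 1 τ (v τ) :=
    lintegral_lintegral_swap hweighted.aemeasurable
  calc L2muSq 1 t (fun z => F z + ∫ τ in (0 : ℝ)..t, v τ z)
      ≤ ∫⁻ z in Ioi 0, (2 * ENNReal.ofReal (mu 1 0 z * F z ^ 2)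
          + ENNReal.ofReal (2 * t) * ∫⁻ τ in Ioc 0 t, ENNReal.ofReal (mu 1 τ z * v τ z ^ 2)) :=
        lintegral_mono fun z => ofReal_mu_mul_sq_add_integral_le (hleft z) ht (F z)
    _ = 2 * L2muSq 1 0 F + ENNReal.ofReal (2 * t)
          * ∫⁻ τ in Ioc 0 t, L2muSq 1 τ (v τ) := by
        rw [lintegral_add_left hinitial, lintegral_const_mul' _ _ ENNReal.ofNat_ne_top,
          lintegral_const_mul' _ _ ENNReal.ofReal_ne_top, htonelli, L2muSq]
    _ ≤ 2 * L2muSq 1 0 F + ENNReal.ofReal (2 * t) * (ENNReal.ofReal t * M) := by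
        gcongr
        calc ∫⁻ τ in Ioc 0 t, L2muSq 1 τ (v τ) ≤ ∫⁻ _ in Ioc 0 t, M :=
              setLIntegral_mono' measurableSet_Ioc fun τ hτ => hM τ (Ioc_subset_Icc_self hτ)
          _ = ENNReal.ofReal t * M := by
              rw [setLIntegral_const, Real.volume_Ioc, sub_zero, mul_comm]

end AprioriBound

section Lift

variable {f g : ℝ → ℝ} {u : ℝ → ℝ → ℝ} {n : ℕ} {lam t : ℝ}

theorem L2muSq_congr (h : EqOn f g (Ioi 0)) : L2muSq lam t f = L2muSq lam t g :=
  setLIntegral_congr_fun measurableSet_Ioi fun z hz => by rw [h hz]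

theorem eqOn_iterate_deriv (h : EqOn f g (Ioi 0)) (k : ℕ) :
    EqOn (deriv^[k] f) (deriv^[k] g) (Ioi 0) := by
  simpa only [iteratedDeriv_eq_iterate] using h.iteratedDeriv_of_isOpen isOpen_Ioi k

theorem HmuSq_add_two (n : ℕ) (lam t : ℝ) (f : ℝ → ℝ) :
    HmuSq (n + 2) lam t f
      = L2muSq lam t f + L2muSq lam t (deriv f) + HmuSq n lam t (deriv^[2] f) := by
  rw [HmuSq, Finset.sum_range_succ', Finset.sum_range_succ', add_assoc, add_comm, add_comm
    (L2muSq lam t _)]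
  rfl

/-- The heat flow `φ` with `∂_z²φ = u` and initial datum vanishing at infinity. Since
`∂ₜφ = ∂_z²φ = u`, it is the initial datum plus the time integral of `u`. -/
def heatLift (u : ℝ → ℝ → ℝ) (t z : ℝ) : ℝ :=
  tailPrimitive (tailPrimitive (u 0)) z + ∫ τ in (0 : ℝ)..t, u τ z

theorem heatLift_zero (u : ℝ → ℝ → ℝ) : heatLift u 0 = tailPrimitive (tailPrimitive (u 0)) :=
  funext fun z => by rw [heatLift, intervalIntegral.integral_same, add_zero]

theorem contDiff_tailPrimitive_tailPrimitive (hg : ContDiff ℝ ∞ g) :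
    ContDiff ℝ ∞ (tailPrimitive (tailPrimitive g)) :=
  contDiff_tailPrimitive (contDiff_tailPrimitive hg)

theorem deriv_deriv_tailPrimitive_tailPrimitive (hg : Continuous g) :
    deriv^[2] (tailPrimitive (tailPrimitive g)) = g := by
  rw [Function.iterate_succ_apply, Function.iterate_one,
    deriv_tailPrimitive (continuous_tailPrimitive hg), deriv_tailPrimitive hg]

theorem tailPrimitive_tailPrimitive_zero (hg : Continuous g) (hg_top : L2muSq 1 0 g ≠ ⊤)
    (hmoment : ∫ z in Ioi 0, z * g z = 0) : tailPrimitive (tailPrimitive g) 0 = 0 := by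
  have hG_top : L2muSq 1 0 (tailPrimitive g) ≠ ⊤ :=
    ne_top_of_le_ne_top (ENNReal.mul_ne_top ENNReal.ofReal_ne_top hg_top)
      (L2muSq_tailPrimitive_le le_rfl hg)
  have hmass := integral_tailPrimitive (gaussRate_pos le_rfl) hg
    (integrableOn_of_L2muSq_ne_top hg hg_top)
    (integrableOn_of_L2muSq_ne_top (continuous_tailPrimitive hg) hG_top)
  rw [tailPrimitive, hmass, hmoment, intervalIntegral.integral_same, neg_zero, sub_zero]

theorem IsDirichletHeatFlow.isDirichletHeatFlow_heatLift (hu : IsDirichletHeatFlow u)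
    (hu_top : L2muSq 1 0 (u 0) ≠ ⊤) (hmoment : ∫ z in Ioi 0, z * u 0 z = 0) :
    IsDirichletHeatFlow (heatLift u) :=
  have hu₀ := hu.smooth_right 0
  hu.add_integral (contDiff_tailPrimitive_tailPrimitive hu₀)
    (deriv_deriv_tailPrimitive_tailPrimitive hu₀.continuous)
    (tailPrimitive_tailPrimitive_zero hu₀.continuous hu_top hmoment)

theorem IsHeatFlow.eqOn_iterate_deriv_heatLift (hu : IsHeatFlow u) (ht : 0 ≤ t) (k : ℕ) :
    EqOn (deriv^[k + 2] (heatLift u t)) (deriv^[k] (u t)) (Ioi 0) := by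
  have hu₀ := hu.smooth_right 0
  rw [Function.iterate_add_apply]
  exact eqOn_iterate_deriv (fun z hz => hu.deriv_deriv_add_integral
    (contDiff_tailPrimitive_tailPrimitive hu₀)
    (deriv_deriv_tailPrimitive_tailPrimitive hu₀.continuous) ht (le_of_lt hz)) k

theorem IsHeatFlow.HmuSq_heatLift (hu : IsHeatFlow u) (ht : 0 ≤ t) (n : ℕ) :
    HmuSq (n + 2) lam t (heatLift u t)
      = L2muSq lam t (heatLift u t) + L2muSq lam t (deriv (heatLift u t))
        + HmuSq n lam t (u t) := by
  rw [HmuSq_add_two]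
  congr 1
  refine Finset.sum_congr rfl fun k _ => L2muSq_congr ?_
  rw [← Function.iterate_add_apply]
  exact hu.eqOn_iterate_deriv_heatLift ht k

theorem L2muSq_tailPrimitive_zero_le (hg : Continuous g) :
    L2muSq 1 0 (tailPrimitive g) ≤ 2 * L2muSq 1 0 g := by
  simpa using L2muSq_tailPrimitive_le le_rfl hg

theorem L2muSq_tailPrimitive_tailPrimitive_zero_le (hg : Continuous g) :
    L2muSq 1 0 (tailPrimitive (tailPrimitive g)) ≤ 4 * L2muSq 1 0 g :=
  calc L2muSq 1 0 (tailPrimitive (tailPrimitive g))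
      ≤ 2 * L2muSq 1 0 (tailPrimitive g) :=
        L2muSq_tailPrimitive_zero_le (continuous_tailPrimitive hg)
    _ ≤ 2 * (2 * L2muSq 1 0 g) := by
        gcongr
        exact L2muSq_tailPrimitive_zero_le hg
    _ = 4 * L2muSq 1 0 g := by ring

theorem IsHeatFlow.HmuSq_heatLift_zero_le (hu : IsHeatFlow u) (n : ℕ) :
    HmuSq (n + 2) 1 0 (heatLift u 0) ≤ 7 * HmuSq n 1 0 (u 0) := by
  have hu₀ := (hu.smooth_right 0).continuous
  rw [hu.HmuSq_heatLift le_rfl, heatLift_zero, deriv_tailPrimitive (continuous_tailPrimitive hu₀)]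
  have hzeroth : L2muSq 1 0 (u 0) ≤ HmuSq n 1 0 (u 0) :=
    L2muSq_iterate_deriv_le_HmuSq n.zero_le 1 0 (u 0)
  calc _ ≤ 4 * L2muSq 1 0 (u 0) + 2 * L2muSq 1 0 (u 0) + HmuSq n 1 0 (u 0) := by
        gcongr
        · exact L2muSq_tailPrimitive_tailPrimitive_zero_le hu₀
        · exact L2muSq_tailPrimitive_zero_le hu₀
    _ ≤ 4 * HmuSq n 1 0 (u 0) + 2 * HmuSq n 1 0 (u 0) + HmuSq n 1 0 (u 0) := by gcongr
    _ = 7 * HmuSq n 1 0 (u 0) := by ring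

theorem IsHeatFlow.HmuSq_heatLift_le (hu : IsHeatFlow u) (hn : 1 ≤ n) (ht : 0 ≤ t) {M : ENNReal}
    (hM : ∀ τ ∈ Icc 0 t, HmuSq n 1 τ (u τ) ≤ M) :
    HmuSq (n + 2) 1 t (heatLift u t) ≤ (13 + 4 * ENNReal.ofReal t ^ 2) * M := by
  have hu₀ := hu.smooth_right 0
  have hG := contDiff_tailPrimitive hu₀
  have hderiv : deriv (heatLift u t)
      = fun z => tailPrimitive (u 0) z + ∫ τ in (0 : ℝ)..t, deriv (u τ) z := funext fun z =>
    (hasDerivAt_add_integral_left hu.smooth (hasDerivAt_tailPrimitive hG.continuous z) t).deriv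
  have hbound {k : ℕ} (hk : k ≤ n) : ∀ τ ∈ Icc 0 t, L2muSq 1 τ (deriv^[k] (u τ)) ≤ M :=
    fun τ hτ => (L2muSq_iterate_deriv_le_HmuSq hk 1 τ (u τ)).trans (hM τ hτ)
  have hinitial : L2muSq 1 0 (u 0) ≤ M := hbound n.zero_le 0 (left_mem_Icc.2 ht)
  have htwo : ENNReal.ofReal (2 * t) = 2 * ENNReal.ofReal t := by
    rw [ENNReal.ofReal_mul zero_le_two, ENNReal.ofReal_ofNat]
  calc HmuSq (n + 2) 1 t (heatLift u t)
      ≤ (2 * (4 * M) + ENNReal.ofReal (2 * t) * (ENNReal.ofReal t * M))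
        + (2 * (2 * M) + ENNReal.ofReal (2 * t) * (ENNReal.ofReal t * M)) + M := by
        rw [hu.HmuSq_heatLift ht, hderiv]
        gcongr
        · refine (L2muSq_add_integral_le (contDiff_tailPrimitive hG).continuous
            hu.smooth.continuous ht (hbound n.zero_le)).trans ?_
          gcongr
          exact (L2muSq_tailPrimitive_tailPrimitive_zero_le hu₀.continuous).trans (by gcongr)
        · refine (L2muSq_add_integral_le hG.continuous
            (contDiff_deriv_right hu.smooth).continuous ht (hbound hn)).trans ?_
          gcongr
          exact (L2muSq_tailPrimitive_zero_le hu₀.continuous).trans (by gcongr)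
        · exact hM t (right_mem_Icc.2 ht)
    _ = (13 + 4 * ENNReal.ofReal t ^ 2) * M := by
        rw [htwo]
        ring

end Lift

section MomentDecay

variable {f : ℝ → ℝ} {u : ℝ → ℝ → ℝ} {n k : ℕ} {ε t T : ℝ} {M B : ENNReal}

theorem IsDirichletHeatFlow.L2muSq_iterate_deriv_le_of_moment_eq_zero (hu : IsDirichletHeatFlow u)
    (hmoment : ∫ z in Ioi 0, z * u 0 z = 0) (hε₀ : 0 < ε) (hε₁ : ε ≤ 1) (hT : 0 ≤ T)
    (hn : 1 ≤ n) (hk : k ≤ n) (hM_top : M ≠ ⊤) (hM : ∀ t ∈ Icc 0 T, HmuSq n 1 t (u t) ≤ M) :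
    L2muSq 1 T (deriv^[k] (u T))
      ≤ ENNReal.ofReal (21 * (k + 2).factorial / ε * (1 + T) ^ (-(7 / 2 - ε + k)))
        * HmuSq n 1 0 (u 0) := by
  have hu_top : L2muSq 1 0 (u 0) ≠ ⊤ := ne_top_of_le_ne_top hM_top <|
    (L2muSq_iterate_deriv_le_HmuSq n.zero_le 1 0 (u 0)).trans (hM 0 (left_mem_Icc.2 hT))
  have hlift (t : ℝ) (ht : t ∈ Icc 0 T) :
      HmuSq (n + 2) 1 t (heatLift u t) ≤ (13 + 4 * ENNReal.ofReal T ^ 2) * M := by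
    refine (hu.HmuSq_heatLift_le hn ht.1 fun τ hτ => hM τ ⟨hτ.1, hτ.2.trans ht.2⟩).trans ?_
    have := ht.2
    gcongr
  have hlift_top : (13 + 4 * ENNReal.ofReal T ^ 2) * M ≠ ⊤ := by finiteness
  have hdecay := (hu.isDirichletHeatFlow_heatLift hu_top hmoment).L2muSq_iterate_deriv_le hε₀ hε₁ hT
    (Nat.add_le_add_right hk 2) hlift_top hlift
  rw [L2muSq_congr (hu.eqOn_iterate_deriv_heatLift hT k)] at hdecay
  calc L2muSq 1 T (deriv^[k] (u T))
      ≤ ENNReal.ofReal (3 * (k + 2).factorial / ε * (1 + T) ^ (-(3 / 2 - ε + (k + 2 : ℕ))))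
        * (7 * HmuSq n 1 0 (u 0)) := by
        refine hdecay.trans ?_
        gcongr
        exact hu.HmuSq_heatLift_zero_le n
    _ = ENNReal.ofReal (21 * (k + 2).factorial / ε * (1 + T) ^ (-(7 / 2 - ε + k)))
        * HmuSq n 1 0 (u 0) := by
        rw [← mul_assoc, ← ENNReal.ofReal_ofNat 7, ← ENNReal.ofReal_mul (by positivity)]
        congr 2
        push_cast
        ring_nf

theorem ofReal_gaussian_mul_sq_le_of_L2muSq_le (ht : 0 ≤ t) (hf : ContDiff ℝ 1 f) {a b p : ℝ}
    (ha : 0 ≤ a) (hb : 0 ≤ b)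
    (h : L2muSq 1 t f ≤ ENNReal.ofReal (a * (1 + t) ^ (-(p - 1 / 2))) * B)
    (h' : L2muSq 1 t (deriv f) ≤ ENNReal.ofReal (b * (1 + t) ^ (-(p + 1 / 2))) * B)
    {z : ℝ} (hz : 0 ≤ z) :
    ENNReal.ofReal (Real.exp (gaussRate t * z ^ 2) * f z ^ 2)
      ≤ ENNReal.ofReal ((a + b) * (1 + t) ^ (-p)) * B := by
  have hs : 0 < 1 + t := by positivity
  set r := (1 + t) ^ (-1 / 2 : ℝ)
  have hr : 0 < r := by positivity
  have hlow : r * (1 + t) ^ (-(p - 1 / 2)) = (1 + t) ^ (-p) := by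
    rw [← Real.rpow_add hs]
    ring_nf
  have hhigh : r⁻¹ * (1 + t) ^ (-(p + 1 / 2)) = (1 + t) ^ (-p) := by
    rw [← Real.rpow_neg hs.le, ← Real.rpow_add hs]
    ring_nf
  calc ENNReal.ofReal (Real.exp (gaussRate t * z ^ 2) * f z ^ 2)
      ≤ ENNReal.ofReal r * (ENNReal.ofReal (a * (1 + t) ^ (-(p - 1 / 2))) * B)
        + ENNReal.ofReal r⁻¹ * (ENNReal.ofReal (b * (1 + t) ^ (-(p + 1 / 2))) * B) := by
        refine (ofReal_gaussian_mul_sq_le ht hr hf hz).trans ?_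
        gcongr
    _ = ENNReal.ofReal (a * (r * (1 + t) ^ (-(p - 1 / 2)))
          + b * (r⁻¹ * (1 + t) ^ (-(p + 1 / 2)))) * B := by
        rw [ENNReal.ofReal_add (by positivity) (by positivity), mul_left_comm a, mul_left_comm b,
          ENNReal.ofReal_mul hr.le, ENNReal.ofReal_mul (by positivity : 0 ≤ r⁻¹)]
        ring
    _ = ENNReal.ofReal ((a + b) * (1 + t) ^ (-p)) * B := by rw [hlow, hhigh, ← add_mul]

theorem IsDirichletHeatFlow.ofReal_gaussian_mul_iterate_deriv_sq_le (hu : IsDirichletHeatFlow u)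
    (hmoment : ∫ z in Ioi 0, z * u 0 z = 0) (hε₀ : 0 < ε) (hε₁ : ε ≤ 1) (hT : 0 ≤ T)
    (hk : k < n) (hM_top : M ≠ ⊤) (hM : ∀ t ∈ Icc 0 T, HmuSq n 1 t (u t) ≤ M)
    {z : ℝ} (hz : 0 ≤ z) :
    ENNReal.ofReal (Real.exp (gaussRate T * z ^ 2) * deriv^[k] (u T) z ^ 2)
      ≤ ENNReal.ofReal (21 * (k + 4) * (k + 2).factorial / ε * (1 + T) ^ (-(4 - ε + k)))
        * HmuSq n 1 0 (u 0) := by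
  have hsmooth : ContDiff ℝ 1 (deriv^[k] (u T)) :=
    mod_cast contDiff_infty.1 ((hu.smooth_right T).iterate_deriv k) 1
  have hdecay {j : ℕ} (hj : j ≤ n) := hu.L2muSq_iterate_deriv_le_of_moment_eq_zero hmoment hε₀ hε₁
    hT (Nat.one_le_of_lt hk) hj hM_top hM
  have hsum : (21 * (k + 4) * (k + 2).factorial / ε : ℝ)
      = 21 * (k + 2).factorial / ε + 21 * (k + 1 + 2).factorial / ε := by
    have hfactorial : ((k + 1 + 2).factorial : ℝ) = (k + 3) * (k + 2).factorial := by
      rw [add_right_comm, Nat.factorial_succ]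
      push_cast
      ring
    rw [hfactorial]
    ring
  rw [hsum]
  refine ofReal_gaussian_mul_sq_le_of_L2muSq_le hT hsmooth (by positivity) (by positivity)
    ((hdecay hk.le).trans_eq ?_) ?_ hz
  · ring_nf
  · rw [← Function.iterate_succ_apply' deriv]
    refine (hdecay (j := k + 1) hk).trans_eq ?_
    congr 4
    push_cast
    ring

theorem linfPos_le_rpow_of_ofReal_sq_le (h : ∀ z > 0, ENNReal.ofReal (f z ^ 2) ≤ B) :
    linfPos f ≤ B ^ (1 / 2 : ℝ) :=
  iSup₂_le fun z hz => by
    rw [one_div, ENNReal.le_rpow_inv_iff two_pos, ENNReal.rpow_two, ← ENNReal.ofReal_pow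
      (abs_nonneg _), sq_abs]
    exact h z hz

theorem linfPos_le_of_ofReal_gaussian_mul_sq_le (ht : 0 ≤ t)
    (h : ∀ z > 0, ENNReal.ofReal (Real.exp (gaussRate t * z ^ 2) * f z ^ 2) ≤ B) :
    linfPos f ≤ B ^ (1 / 2 : ℝ) :=
  linfPos_le_rpow_of_ofReal_sq_le fun z hz => (ENNReal.ofReal_le_ofReal <|
    le_mul_of_one_le_left (sq_nonneg _) (Real.one_le_exp
      (mul_nonneg (gaussRate_pos ht).le (sq_nonneg z)))).trans (h z hz)

theorem linfPos_mul_le_of_ofReal_gaussian_mul_sq_le (ht : 0 ≤ t)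
    (h : ∀ z > 0, ENNReal.ofReal (Real.exp (gaussRate t * z ^ 2) * f z ^ 2) ≤ B) :
    linfPos (fun z => z * f z) ≤ (ENNReal.ofReal (4 * (1 + t)) * B) ^ (1 / 2 : ℝ) := by
  refine linfPos_le_rpow_of_ofReal_sq_le fun z hz => ?_
  have hgauss : z ^ 2 ≤ 4 * (1 + t) * Real.exp (gaussRate t * z ^ 2) := by
    have hexp := Real.add_one_le_exp (gaussRate t * z ^ 2)
    have hrate := mul_gaussRate (by linarith : -1 < t)
    linear_combination 4 * (1 + t) * hexp + 4 * ht - 4 * z ^ 2 * hrate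
  calc ENNReal.ofReal ((z * f z) ^ 2)
      ≤ ENNReal.ofReal (4 * (1 + t) * (Real.exp (gaussRate t * z ^ 2) * f z ^ 2)) := by
        rw [mul_pow, ← mul_assoc]
        gcongr
    _ ≤ ENNReal.ofReal (4 * (1 + t)) * B := by
        rw [ENNReal.ofReal_mul (by positivity)]
        gcongr
        exact h z hz

theorem ofReal_mul_rpow_neg_mul_rpow_half {a s : ℝ} (ha : 0 ≤ a) (hs : 0 < s) (p : ℝ) :
    (ENNReal.ofReal (a * s ^ (-p)) * B) ^ (1 / 2 : ℝ)
      = ENNReal.ofReal (√a * s ^ (-(p / 2))) * B ^ (1 / 2 : ℝ) := by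
  rw [ENNReal.mul_rpow_of_nonneg _ _ one_half_pos.le, ENNReal.ofReal_rpow_of_nonneg (by positivity)
    one_half_pos.le, Real.mul_rpow ha (by positivity), ← Real.sqrt_eq_rpow, ← Real.rpow_mul hs.le,
    neg_mul, mul_one_div]

theorem IsDirichletHeatFlow.linfPos_iterate_deriv_le (hu : IsDirichletHeatFlow u)
    (hmoment : ∫ z in Ioi 0, z * u 0 z = 0) (hε₀ : 0 < ε) (hε₁ : ε ≤ 1) (hT : 0 ≤ T)
    (hk : k < n) (hM_top : M ≠ ⊤) (hM : ∀ t ∈ Icc 0 T, HmuSq n 1 t (u t) ≤ M) :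
    linfPos (deriv^[k] (u T))
      ≤ ENNReal.ofReal (√(21 * (k + 4) * (k + 2).factorial / ε)
        * (1 + T) ^ (-((4 - ε + k) / 2))) * HmuSq n 1 0 (u 0) ^ (1 / 2 : ℝ) := by
  rw [← ofReal_mul_rpow_neg_mul_rpow_half (by positivity) (by positivity)]
  exact linfPos_le_of_ofReal_gaussian_mul_sq_le hT fun z hz =>
    hu.ofReal_gaussian_mul_iterate_deriv_sq_le hmoment hε₀ hε₁ hT hk hM_top hM (le_of_lt hz)

theorem IsDirichletHeatFlow.linfPos_mul_iterate_deriv_le (hu : IsDirichletHeatFlow u)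
    (hmoment : ∫ z in Ioi 0, z * u 0 z = 0) (hε₀ : 0 < ε) (hε₁ : ε ≤ 1) (hT : 0 ≤ T)
    (hk : k < n) (hM_top : M ≠ ⊤) (hM : ∀ t ∈ Icc 0 T, HmuSq n 1 t (u t) ≤ M) :
    linfPos (fun z => z * deriv^[k] (u T) z)
      ≤ ENNReal.ofReal (√(84 * (k + 4) * (k + 2).factorial / ε)
        * (1 + T) ^ (-((3 - ε + k) / 2))) * HmuSq n 1 0 (u 0) ^ (1 / 2 : ℝ) := by
  have hs : 0 < 1 + T := by positivity
  rw [← ofReal_mul_rpow_neg_mul_rpow_half (by positivity) hs]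
  refine (linfPos_mul_le_of_ofReal_gaussian_mul_sq_le hT fun z hz =>
    hu.ofReal_gaussian_mul_iterate_deriv_sq_le hmoment hε₀ hε₁ hT hk hM_top hM
      (le_of_lt hz)).trans_eq ?_
  rw [← mul_assoc, ← ENNReal.ofReal_mul (by positivity),
    show -(3 - ε + k) = -(4 - ε + k) + 1 by ring, Real.rpow_add_one hs.ne']
  ring_nf

end MomentDecay

theorem statement5_general (δ : ℝ) (hδ : 0 < δ) :
    ∃ C : ℝ, 0 < C ∧ ∀ h : ℝ → ℝ → ℝ, IsDirichletHeatFlow h →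
      ∫ z in Ioi 0, z * h 0 z = 0 →
      (∀ T, ∃ M : ℝ, ∀ t ∈ Icc 0 T, HmuSq 3 1 t (h t) ≤ ENNReal.ofReal M) →
      ∀ t ≥ (0 : ℝ),
        linfPos (deriv (h t)) + linfPos (fun z => z * deriv (h t) z)
            + linfPos (fun z => z * deriv (deriv (h t)) z)
          ≤ ENNReal.ofReal (C * (1 + t) ^ (-(8 - δ) / 4)) * HmuSq 3 1 0 (h 0) ^ (1 / 2 : ℝ) := by
  obtain ⟨ε, hε₀, hε₁, hεδ⟩ : ∃ ε, 0 < ε ∧ ε ≤ 1 ∧ ε ≤ δ / 2 :=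
    ⟨min 1 (δ / 2), by positivity, min_le_left _ _, min_le_right _ _⟩
  refine ⟨3 * √(12096 / ε), by positivity, fun h hh hmoment hbound t ht => ?_⟩
  obtain ⟨M, hM⟩ := hbound t
  have hM_top : ENNReal.ofReal M ≠ ⊤ := ENNReal.ofReal_ne_top
  set N := HmuSq 3 1 0 (h 0)
  set B := ENNReal.ofReal (√(12096 / ε) * (1 + t) ^ (-(8 - δ) / 4)) * N ^ (1 / 2 : ℝ)
  have hrate {c p : ℝ} (hc : c ≤ 12096) (hp : (8 - δ) / 4 ≤ p) :
      ENNReal.ofReal (√(c / ε) * (1 + t) ^ (-p)) * N ^ (1 / 2 : ℝ) ≤ B := by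
    simp only [B]
    gcongr <;> linarith
  have hderiv : linfPos (deriv (h t)) ≤ B :=
    (hh.linfPos_iterate_deriv_le (k := 1) hmoment hε₀ hε₁ ht (by norm_num) hM_top hM).trans
      (hrate (by norm_num [Nat.factorial]) (by norm_num; linarith))
  have hmul_deriv : linfPos (fun z => z * deriv (h t) z) ≤ B :=
    (hh.linfPos_mul_iterate_deriv_le (k := 1) hmoment hε₀ hε₁ ht (by norm_num) hM_top hM).trans
      (hrate (by norm_num [Nat.factorial]) (by norm_num; linarith))
  have hmul_deriv₂ : linfPos (fun z => z * deriv (deriv (h t)) z) ≤ B :=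
    (hh.linfPos_mul_iterate_deriv_le (k := 2) hmoment hε₀ hε₁ ht (by norm_num) hM_top hM).trans
      (hrate (by norm_num [Nat.factorial]) (by norm_num; linarith))
  refine (add_le_add_three hderiv hmul_deriv hmul_deriv₂).trans_eq ?_
  rw [mul_assoc 3, ENNReal.ofReal_mul zero_le_three, ENNReal.ofReal_ofNat]
  ring

/-- Refined decay for the heat equation on the half-line: if
`h ∈ L∞([0,∞); H³_μ)` solves `∂ₜh = ∂_z²h` with `h(t,0) = 0` and the initial datum
`h₀ ∈ H³_{μ_in}` has vanishing first moment, then for every `0 < δ < 2` there is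
`C_δ > 0`, depending only on `δ`, with
`‖∂_z h(t)‖_{L∞} + ‖z∂_z h(t)‖_{L∞} + ‖z∂_z² h(t)‖_{L∞} ≤ C_δ‖h₀‖_{H³_{μ_in}}(1+t)^{-(8-δ)/4}`. -/
theorem statement5 (δ : ℝ) (hδ0 : 0 < δ) (hδ2 : δ < 2) :
    ∃ C : ℝ, 0 < C ∧
      ∀ (h : ℝ → ℝ → ℝ) (h₀ : ℝ → ℝ),
        (ContDiff ℝ (⊤ : ℕ∞) fun p : ℝ × ℝ => h p.1 p.2) →
        (∀ t ≥ (0 : ℝ), ∀ z ≥ (0 : ℝ),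
          deriv (fun s => h s z) t = deriv (deriv (h t)) z) →
        (∀ t ≥ (0 : ℝ), h t 0 = 0) →
        (∀ z : ℝ, h 0 z = h₀ z) →
        HmuSq 3 1 0 h₀ < ⊤ →
        (∫ z in Set.Ioi (0 : ℝ), z * h₀ z = 0) →
        (∃ M : ℝ, ∀ t ≥ (0 : ℝ), HmuSq 3 1 t (h t) ≤ ENNReal.ofReal M) →
        ∀ t ≥ (0 : ℝ),
          linfPos (deriv (h t))
              + linfPos (fun z => z * deriv (h t) z)
              + linfPos (fun z => z * deriv (deriv (h t)) z)
            ≤ ENNReal.ofReal (C * (1 + t) ^ (-(8 - δ) / 4)) *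
                (HmuSq 3 1 0 h₀) ^ (1 / 2 : ℝ) := by
  obtain ⟨C, hC, hdecay⟩ := statement5_general δ hδ0
  refine ⟨C, hC, fun h h₀ hsmooth hheat hboundary hinit _ hmoment ⟨M, hM⟩ => ?_⟩
  obtain rfl : h 0 = h₀ := funext hinit
  exact hdecay h ⟨⟨hsmooth, hheat⟩, hboundary⟩ hmoment fun _ => ⟨M, fun t ht => hM t ht.1⟩
end
end

section
/- Let H = H(t,z) be a smooth function on [0,∞) × [0,∞) satisfying (∂ₜ − ∂_z² + 2/(1+t)) H = 0 with Neumann boundary condition ∂_z H(t,0) = 0, and assume that for each t the functions H(t,·), z H(t,·), ∂_z H(t,·) lie in L²_μ, that μ(t,z) H(t,z) ∂_z H(t,z) → 0 and z μ(t,z) H(t,z)² → 0 as z → ∞, and that differentiation under the integral sign is justified. Then for every 0 < δ < 2 and every t ≥ 0: (1+t)^{(9−δ)/2} ‖H(t)‖²_{L²_μ} + δ ∫₀ᵗ (1+s)^{(9−δ)/2} ‖∂_z H(s)‖²_{L²_μ} ds ≤ ‖H(0)‖²_{L²_{μ_in}}. -/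
open MeasureTheory Filter Set

noncomputable section

/-!
Put `D = ∫ μ (∂_z H)²` and `E = ∫ μ H²`. Integrating by parts, and completing the square in
`∂_z H + z H / (2(1+t))`, the damped heat equation gives
`d/dt ((1+t)^a E) + δ (1+t)^a D = -(2-δ) (1+t)^a ∫ μ (∂_z H + z H / (2(1+t)))² ≤ 0`
for `a = (9-δ)/2`. The term `∫ μ H ∂_z²H` need not converge, so the computation is carried out
with the weight cut off by `(1 - z/R)²`. The cutoff is nonincreasing, which gives the term involving
`z H²` a favourable sign; the only error is `4 / ((2-δ)R²)` times the weighted energy, and it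
vanishes as `R → ∞`.
-/

section Rectangle

variable {a b : ℝ × ℝ} {f g d e f₁ g₂ : ℝ × ℝ → ℝ} {U : Set (ℝ × ℝ)}

lemma fderiv_apply_fst_of_hasDerivAt {p : ℝ × ℝ} {c : ℝ} (hf : DifferentiableAt ℝ f p)
    (h : HasDerivAt (fun s => f (s, p.2)) c p.1) : fderiv ℝ f p (1, 0) = c :=
  (hf.hasFDerivAt.comp_hasDerivAt (f := fun s => (s, p.2)) p.1
    ((hasDerivAt_id p.1).prodMk (hasDerivAt_const p.1 p.2))).unique h

lemma fderiv_apply_snd_of_hasDerivAt {p : ℝ × ℝ} {c : ℝ} (hf : DifferentiableAt ℝ f p)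
    (h : HasDerivAt (fun z => f (p.1, z)) c p.2) : fderiv ℝ f p (0, 1) = c :=
  (hf.hasFDerivAt.comp_hasDerivAt (f := fun z => (p.1, z)) p.2
    ((hasDerivAt_const p.2 p.1).prodMk (hasDerivAt_id p.2))).unique h

lemma integral_add_integral_le_of_deriv_add_le (hab : a ≤ b) (hU : IsOpen U) (hUab : Icc a b ⊆ U)
    (hf : ContDiffOn ℝ 1 f U) (hg : ContDiffOn ℝ 1 g U)
    (hd : ContinuousOn d (Icc a b)) (he : ContinuousOn e (Icc a b))
    (hf₁ : ∀ p ∈ Icc a b, HasDerivAt (fun s => f (s, p.2)) (f₁ p) p.1)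
    (hg₂ : ∀ p ∈ Icc a b, HasDerivAt (fun z => g (p.1, z)) (g₂ p) p.2)
    (hga : ∀ s ∈ Icc a.1 b.1, g (s, a.2) = 0) (hgb : ∀ s ∈ Icc a.1 b.1, g (s, b.2) = 0)
    (hle : ∀ p ∈ Icc a b, f₁ p + d p ≤ g₂ p + e p) :
    (∫ z in a.2..b.2, f (b.1, z)) + ∫ p in Icc a b, d p
      ≤ (∫ z in a.2..b.2, f (a.1, z)) + ∫ p in Icc a b, e p := by
  have hdiff {h : ℝ × ℝ → ℝ} (hh : ContDiffOn ℝ 1 h U) {p} (hp : p ∈ Icc a b) :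
      DifferentiableAt ℝ h p :=
    (hh.differentiableOn one_ne_zero).differentiableAt (hU.mem_nhds (hUab hp))
  have hcont {h : ℝ × ℝ → ℝ} (hh : ContDiffOn ℝ 1 h U) (v : ℝ × ℝ) :
      ContinuousOn (fun p => fderiv ℝ h p v) (Icc a b) :=
    ((hh.continuousOn_fderiv_of_isOpen hU le_rfl).mono hUab).clm_apply continuousOn_const
  have hint {h : ℝ × ℝ → ℝ} (hh : ContinuousOn h (Icc a b)) : IntegrableOn h (Icc a b) :=
    hh.integrableOn_compact isCompact_Icc
  have hmem {p : ℝ × ℝ} (hp : p ∈ Ioo a.1 b.1 ×ˢ Ioo a.2 b.2) : p ∈ Icc a b :=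
    ⟨⟨hp.1.1.le, hp.2.1.le⟩, ⟨hp.1.2.le, hp.2.2.le⟩⟩
  have hside {y : ℝ} (hy : ∀ s ∈ Icc a.1 b.1, g (s, y) = 0) :
      ∫ s in a.1..b.1, -g (s, y) = 0 := by
    rw [intervalIntegral.integral_congr (g := fun _ => 0) fun s hs => ?_,
      intervalIntegral.integral_zero]
    rw [uIcc_of_le hab.1] at hs
    simp only [hy s hs, neg_zero]
  have hdiv := integral_divergence_prod_Icc_of_hasFDerivAt_of_le f (fun p => -g p) (fderiv ℝ f)
    (fun p => -fderiv ℝ g p) a b hab (hf.continuousOn.mono hUab) (hg.continuousOn.mono hUab).neg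
    (fun p hp => (hdiff hf (hmem hp)).hasFDerivAt)
    (fun p hp => (hdiff hg (hmem hp)).hasFDerivAt.neg)
    (hint ((hcont hf _).add (hcont hg _).neg))
  rw [hside hga, hside hgb] at hdiv
  have hmono : ∫ p in Icc a b, fderiv ℝ f p (1, 0) + (-fderiv ℝ g p) (0, 1)
      ≤ ∫ p in Icc a b, e p - d p := by
    refine setIntegral_mono_on (hint ((hcont hf _).add (hcont hg _).neg)) (hint (he.sub hd))
      measurableSet_Icc fun p hp => ?_
    have hfp := fderiv_apply_fst_of_hasDerivAt (hdiff hf hp) (hf₁ p hp)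
    have hgp := fderiv_apply_snd_of_hasDerivAt (hdiff hg hp) (hg₂ p hp)
    rw [neg_apply, hfp, hgp]
    linarith [hle p hp]
  rw [integral_sub (hint he) (hint hd)] at hmono
  linarith

lemma ofReal_setIntegral_Icc_prod (hd : ContinuousOn d (Icc a b)) (hd0 : ∀ p ∈ Icc a b, 0 ≤ d p) :
    ENNReal.ofReal (∫ p in Icc a b, d p)
      = ∫⁻ s in Ioc a.1 b.1, ∫⁻ z in Ioc a.2 b.2, ENNReal.ofReal (d (s, z)) := by
  rw [ofReal_integral_eq_lintegral_ofReal (hd.integrableOn_compact isCompact_Icc)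
    ((ae_restrict_mem measurableSet_Icc).mono hd0), Icc_prod_eq, Measure.volume_eq_prod,
    setLIntegral_prod, ← restrict_Ioc_eq_restrict_Icc, ← restrict_Ioc_eq_restrict_Icc]
  rw [← Icc_prod_eq, ← Measure.volume_eq_prod]
  exact (hd.aemeasurable measurableSet_Icc).ennreal_ofReal

lemma ofReal_intervalIntegral {x y : ℝ} {h : ℝ → ℝ} (hxy : x ≤ y) (hh : ContinuousOn h (Icc x y))
    (hh0 : ∀ z ∈ Icc x y, 0 ≤ h z) :
    ENNReal.ofReal (∫ z in x..y, h z) = ∫⁻ z in Ioc x y, ENNReal.ofReal (h z) := by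
  rw [intervalIntegral.integral_of_le hxy, ofReal_integral_eq_lintegral_ofReal
    ((hh.integrableOn_compact isCompact_Icc).mono_set Ioc_subset_Icc_self)]
  filter_upwards [ae_restrict_mem measurableSet_Ioc] with z hz
  exact hh0 z (Ioc_subset_Icc_self hz)

lemma lintegral_add_lintegral_le_of_deriv_add_le (hab : a ≤ b) (hU : IsOpen U) (hUab : Icc a b ⊆ U)
    (hf : ContDiffOn ℝ 1 f U) (hg : ContDiffOn ℝ 1 g U)
    (hd : ContinuousOn d (Icc a b)) (he : ContinuousOn e (Icc a b))
    (hf0 : ∀ p ∈ Icc a b, 0 ≤ f p) (hd0 : ∀ p ∈ Icc a b, 0 ≤ d p) (he0 : ∀ p ∈ Icc a b, 0 ≤ e p)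
    (hf₁ : ∀ p ∈ Icc a b, HasDerivAt (fun s => f (s, p.2)) (f₁ p) p.1)
    (hg₂ : ∀ p ∈ Icc a b, HasDerivAt (fun z => g (p.1, z)) (g₂ p) p.2)
    (hga : ∀ s ∈ Icc a.1 b.1, g (s, a.2) = 0) (hgb : ∀ s ∈ Icc a.1 b.1, g (s, b.2) = 0)
    (hle : ∀ p ∈ Icc a b, f₁ p + d p ≤ g₂ p + e p) :
    (∫⁻ z in Ioc a.2 b.2, ENNReal.ofReal (f (b.1, z)))
        + ∫⁻ s in Ioc a.1 b.1, ∫⁻ z in Ioc a.2 b.2, ENNReal.ofReal (d (s, z))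
      ≤ (∫⁻ z in Ioc a.2 b.2, ENNReal.ofReal (f (a.1, z)))
        + ∫⁻ s in Ioc a.1 b.1, ∫⁻ z in Ioc a.2 b.2, ENNReal.ofReal (e (s, z)) := by
  have hslice {s : ℝ} (hs : s ∈ Icc a.1 b.1) {z : ℝ} (hz : z ∈ Icc a.2 b.2) : (s, z) ∈ Icc a b :=
    ⟨⟨hs.1, hz.1⟩, ⟨hs.2, hz.2⟩⟩
  have hf_slice {s : ℝ} (hs : s ∈ Icc a.1 b.1) : ContinuousOn (fun z => f (s, z)) (Icc a.2 b.2) :=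
    (hf.continuousOn.mono hUab).comp (by fun_prop) fun z hz => hslice hs hz
  have hf_ofReal {s : ℝ} (hs : s ∈ Icc a.1 b.1) :=
    ofReal_intervalIntegral hab.2 (hf_slice hs) fun z hz => hf0 _ (hslice hs hz)
  have hf_nonneg {s : ℝ} (hs : s ∈ Icc a.1 b.1) : 0 ≤ ∫ z in a.2..b.2, f (s, z) :=
    intervalIntegral.integral_nonneg hab.2 fun z hz => hf0 _ (hslice hs hz)
  have ha : a.1 ∈ Icc a.1 b.1 := left_mem_Icc.2 hab.1
  have hb : b.1 ∈ Icc a.1 b.1 := right_mem_Icc.2 hab.1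
  rw [← hf_ofReal ha, ← hf_ofReal hb, ← ofReal_setIntegral_Icc_prod hd hd0,
    ← ofReal_setIntegral_Icc_prod he he0,
    ← ENNReal.ofReal_add (hf_nonneg hb) (setIntegral_nonneg measurableSet_Icc hd0),
    ← ENNReal.ofReal_add (hf_nonneg ha) (setIntegral_nonneg measurableSet_Icc he0)]
  exact ENNReal.ofReal_le_ofReal
    (integral_add_integral_le_of_deriv_add_le hab hU hUab hf hg hd he hf₁ hg₂ hga hgb hle)

end Rectangle

section Weight

variable {lam t z : ℝ}

lemma mu_nonneg (lam t z : ℝ) : 0 ≤ mu lam t z := (Real.exp_pos _).le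

lemma measurable_mu (lam : ℝ) : Measurable fun p : ℝ × ℝ => mu lam p.1 p.2 := by
  unfold mu; fun_prop

lemma hasDerivAt_mu_left (ht : 1 + t ≠ 0) :
    HasDerivAt (fun t => mu lam t z) (mu lam t z * (-(lam * z ^ 2 / (4 * (1 + t) ^ 2)))) t := by
  have hden : HasDerivAt (fun t : ℝ => 4 * (1 + t)) 4 t := by
    simpa using ((hasDerivAt_id t).const_add 1).const_mul 4
  refine (((hasDerivAt_const t (lam * z ^ 2)).fun_div hden (by positivity)).exp).congr_deriv ?_
  unfold mu
  field_simp
  ring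

lemma hasDerivAt_mu_right (lam t z : ℝ) :
    HasDerivAt (mu lam t) (mu lam t z * (lam * z / (2 * (1 + t)))) z := by
  refine ((((hasDerivAt_pow 2 z).const_mul lam).div_const (4 * (1 + t))).exp).congr_deriv ?_
  unfold mu
  field_simp
  ring

lemma hasDerivAt_rpow_mul_mu_mul_sq {w : ℝ → ℝ} {w' a : ℝ} (ht : 0 < 1 + t)
    (hw : HasDerivAt w w' t) :
    HasDerivAt (fun s => (1 + s) ^ a * (mu lam s z * w s ^ 2))
      ((1 + t) ^ a * (mu lam t z *
        ((a / (1 + t) - lam * z ^ 2 / (4 * (1 + t) ^ 2)) * w t ^ 2 + 2 * w t * w'))) t := by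
  have hpow : HasDerivAt (fun s : ℝ => (1 + s) ^ a) (1 * a * (1 + t) ^ (a - 1)) t :=
    ((hasDerivAt_id t).const_add 1).rpow_const (Or.inl ht.ne')
  refine (hpow.mul ((hasDerivAt_mu_left ht.ne').mul (hw.pow 2))).congr_deriv ?_
  rw [Real.rpow_sub_one ht.ne']
  simp only [Pi.mul_apply, Pi.pow_apply]
  field_simp
  ring

end Weight

section Density

variable {a lam κ R : ℝ} {h H : ℝ → ℝ → ℝ} {n : WithTop ℕ∞}

/-- The density `(1+s)^a μ_λ(s,z) h(s,z)²` at the point `p = (s, z)`, whose integral in `z` is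
`(1+s)^a ‖h(s)‖²_{L²_{μ_λ}}`. -/
def weightedDensity (a lam : ℝ) (h : ℝ → ℝ → ℝ) (p : ℝ × ℝ) : ℝ :=
  (1 + p.1) ^ a * (mu lam p.1 p.2 * h p.1 p.2 ^ 2)

/-- The flux `(1+s)^a μ_λ (1 - z/R)² (2 H ∂_z H + κ z H² / (1+s))` at the point `p = (s, z)`. The
term with `κ` is the integration by parts that trades `z H ∂_z H` for `H²` and `z² H²`. -/
def energyFlux (a lam κ R : ℝ) (H : ℝ → ℝ → ℝ) (p : ℝ × ℝ) : ℝ :=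
  (1 + p.1) ^ a * (mu lam p.1 p.2 * ((1 - p.2 / R) ^ 2 *
    (2 * (H p.1 p.2 * deriv (H p.1) p.2) + κ / (1 + p.1) * (p.2 * H p.1 p.2 ^ 2))))

lemma isOpen_setOf_one_add_fst_pos : IsOpen {p : ℝ × ℝ | 0 < 1 + p.1} :=
  isOpen_lt continuous_const (by fun_prop)

lemma weightedDensity_nonneg {p : ℝ × ℝ} (hp : 0 < 1 + p.1) : 0 ≤ weightedDensity a lam h p :=
  mul_nonneg (Real.rpow_nonneg hp.le a) (mul_nonneg (mu_nonneg _ _ _) (sq_nonneg _))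

lemma contDiff_deriv_right_s19 (hH : ContDiff ℝ (n + 1) fun p : ℝ × ℝ => H p.1 p.2) :
    ContDiff ℝ n fun p : ℝ × ℝ => deriv (H p.1) p.2 :=
  ContDiff.fderiv_apply (f := fun p : ℝ × ℝ => H p.1)
    (hH.comp (contDiff_fst.fst.prodMk contDiff_snd)) contDiff_snd contDiff_const le_rfl

lemma contDiffOn_rpow_mul_mu_mul (a lam : ℝ) {v : ℝ × ℝ → ℝ}
    (hv : ContDiffOn ℝ n v {p | 0 < 1 + p.1}) :
    ContDiffOn ℝ n (fun p => (1 + p.1) ^ a * (mu lam p.1 p.2 * v p)) {p | 0 < 1 + p.1} := by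
  have hpow : ContDiffOn ℝ n (fun p : ℝ × ℝ => (1 + p.1) ^ a) {p | 0 < 1 + p.1} :=
    ContDiffOn.rpow_const_of_ne (by fun_prop) fun p hp => ne_of_gt hp
  have hmu : ContDiffOn ℝ n (fun p : ℝ × ℝ => mu lam p.1 p.2) {p | 0 < 1 + p.1} :=
    ContDiffOn.exp (ContDiffOn.div (by fun_prop) (by fun_prop) fun p hp =>
      mul_ne_zero four_ne_zero (ne_of_gt hp))
  exact hpow.mul (hmu.mul hv)

lemma contDiffOn_weightedDensity (hh : ContDiff ℝ n fun p : ℝ × ℝ => h p.1 p.2) :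
    ContDiffOn ℝ n (weightedDensity a lam h) {p | 0 < 1 + p.1} :=
  contDiffOn_rpow_mul_mu_mul a lam (hh.pow 2).contDiffOn

lemma contDiffOn_energyFlux (hH : ContDiff ℝ (n + 1) fun p : ℝ × ℝ => H p.1 p.2) :
    ContDiffOn ℝ n (energyFlux a lam κ R H) {p | 0 < 1 + p.1} := by
  have hH0 : ContDiff ℝ n fun p : ℝ × ℝ => H p.1 p.2 := hH.of_le le_self_add
  have hH1 := contDiff_deriv_right_s19 hH
  have hκ : ContDiffOn ℝ n (fun p : ℝ × ℝ => κ / (1 + p.1)) {p | 0 < 1 + p.1} :=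
    contDiffOn_const.div (by fun_prop) fun p hp => ne_of_gt hp
  have hcut : ContDiff ℝ n fun p : ℝ × ℝ => (1 - p.2 / R) ^ 2 := by fun_prop
  exact contDiffOn_rpow_mul_mu_mul a lam (hcut.contDiffOn.mul
    ((contDiff_const.mul (hH0.mul hH1)).contDiffOn.add
      (hκ.mul (contDiff_snd.mul (hH0.pow 2)).contDiffOn)))

lemma hasDerivAt_energyFlux_s19 (a lam κ R : ℝ) {s z p q : ℝ} (hp : HasDerivAt (H s) p z)
    (hq : HasDerivAt (deriv (H s)) q z) :
    HasDerivAt (fun z => energyFlux a lam κ R H (s, z))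
      ((1 + s) ^ a * (mu lam s z *
        (lam * z / (2 * (1 + s)) *
            ((1 - z / R) ^ 2 * (2 * (H s z * p) + κ / (1 + s) * (z * H s z ^ 2)))
          + (-(2 * (1 - z / R) * R⁻¹) * (2 * (H s z * p) + κ / (1 + s) * (z * H s z ^ 2))
            + (1 - z / R) ^ 2 * (2 * (p ^ 2 + H s z * q)
              + κ / (1 + s) * (H s z ^ 2 + 2 * z * H s z * p)))))) z := by
  have hcut : HasDerivAt (fun z => (1 - z / R) ^ 2) (-(2 * (1 - z / R) * R⁻¹)) z := by
    refine ((((hasDerivAt_id z).div_const R).const_sub 1).pow 2).congr_deriv ?_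
    simp only [id, Nat.cast_ofNat]
    ring
  refine (((hasDerivAt_mu_right lam s z).mul (hcut.mul (((hp.mul hq).const_mul 2).add
    (((hasDerivAt_id z).mul (hp.pow 2)).const_mul (κ / (1 + s)))))).const_mul
      ((1 + s) ^ a)).congr_deriv ?_
  simp only [Pi.mul_apply, Pi.add_apply, Pi.pow_apply, id, hp.deriv]
  ring

end Density

section LocalEnergy

/-- `H` is a `C²` function which, on the quarter plane `t, z ≥ 0`, solves the damped heat equation
`(∂ₜ − ∂_z² + γ/(1+t)) H = 0` with the Neumann boundary condition at `z = 0`. -/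
structure IsDampedHeatSolution (γ : ℝ) (H : ℝ → ℝ → ℝ) : Prop where
  contDiff : ContDiff ℝ 2 fun p : ℝ × ℝ => H p.1 p.2
  damped_heat_eq : ∀ t ≥ (0 : ℝ), ∀ z ≥ (0 : ℝ),
    deriv (fun s => H s z) t - deriv (deriv (H t)) z + γ / (1 + t) * H t z = 0
  neumann : ∀ t ≥ (0 : ℝ), deriv (H t) 0 = 0

variable {γ lam δ : ℝ} {H : ℝ → ℝ → ℝ}

/- Here `u, p, q` are `H, ∂_z H, ∂_z² H`, while `χ` is the cutoff and `-ρ` its slope. With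
`v = p + lam z u / (2τ)`, the right-hand side minus the left-hand side is
`(2-δ) (χ v - 2ρu / (2-δ))² + lam (1-lam) (z χ u)² / (4τ²) + lam (1+δ) χ ρ z u² / τ`. -/
lemma energy_density_inequality (hlam : lam ∈ Icc 0 1) (hδ : δ ∈ Ico 0 2) {τ z χ ρ : ℝ}
    (hτ : 0 < τ) (hz : 0 ≤ z) (hχ : 0 ≤ χ) (hρ : 0 ≤ ρ) (u p q : ℝ) :
    ((4 * γ + lam * (1 - δ)) / 2 / τ - lam * z ^ 2 / (4 * τ ^ 2)) * (χ * u) ^ 2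
        + 2 * (χ * u) * (χ * (q - γ / τ * u)) + δ * (χ * p) ^ 2
      ≤ lam * z / (2 * τ) * (χ ^ 2 * (2 * (u * p) + lam * (1 - δ) / 2 / τ * (z * u ^ 2)))
        + (-(2 * χ * ρ) * (2 * (u * p) + lam * (1 - δ) / 2 / τ * (z * u ^ 2))
          + χ ^ 2 * (2 * (p ^ 2 + u * q) + lam * (1 - δ) / 2 / τ * (u ^ 2 + 2 * z * u * p)))
        + 4 / (2 - δ) * ρ ^ 2 * u ^ 2 := by
  obtain ⟨hlam0, hlam1⟩ := hlam
  obtain ⟨hδ0, hδ2⟩ := hδ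
  have hδ' : 0 < 2 - δ := sub_pos.2 hδ2
  have hlam' : 0 ≤ 1 - lam := sub_nonneg.2 hlam1
  have hsquares : 0 ≤ (2 - δ) * (χ * (p + lam * z * u / (2 * τ)) - 2 / (2 - δ) * ρ * u) ^ 2
      + lam * (1 - lam) / 4 * (z * χ * u / τ) ^ 2 + lam * (1 + δ) * χ * ρ * z * u ^ 2 / τ := by
    positivity
  rw [← sub_nonneg]
  convert hsquares using 1
  field_simp
  ring

/-- The piecewise linear cutoff which decreases from `1` at `z = 0` to `0` at `z = R` and vanishes
beyond `R`. -/
def tent (R z : ℝ) : ℝ := max 0 (1 - z / R)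

variable {R T a s : ℝ} {h : ℝ → ℝ → ℝ}

lemma measurable_tent (R : ℝ) : Measurable (tent R) := by
  unfold tent; fun_prop

lemma tent_nonneg (R z : ℝ) : 0 ≤ tent R z := le_max_left _ _

lemma tent_le_one {z : ℝ} (hR : 0 ≤ R) (hz : 0 ≤ z) : tent R z ≤ 1 :=
  max_le zero_le_one (sub_le_self _ (div_nonneg hz hR))

lemma tent_le_tent {R' z : ℝ} (hR : 0 < R) (hRR' : R ≤ R') (hz : 0 ≤ z) : tent R z ≤ tent R' z := by
  unfold tent; gcongr

lemma tendsto_tent (z : ℝ) : Tendsto (fun R => tent R z) atTop (nhds 1) := by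
  have hdiv : Tendsto (fun R => 1 - z / R) atTop (nhds (1 - 0)) :=
    (tendsto_const_nhds.div_atTop tendsto_id).const_sub 1
  simpa [tent] using (tendsto_const_nhds (x := (0 : ℝ))).max hdiv

lemma L2muSq_tent_mul (hR : 0 < R) (lam t : ℝ) (h : ℝ → ℝ) :
    L2muSq lam t (fun z => tent R z * h z)
      = ∫⁻ z in Ioc 0 R, ENNReal.ofReal (mu lam t z * ((1 - z / R) * h z) ^ 2) := by
  rw [L2muSq, ← Ioc_union_Ioi_eq_Ioi hR.le, lintegral_union measurableSet_Ioi Ioc_disjoint_Ioi_same,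
    setLIntegral_congr_fun (s := Ioi R) (g := 0) measurableSet_Ioi, Pi.zero_def, lintegral_zero,
    add_zero]
  · refine setLIntegral_congr_fun measurableSet_Ioc fun z hz => ?_
    have hle : z / R ≤ 1 := (div_le_one hR).2 hz.2
    simp only [tent, max_eq_right (sub_nonneg.2 hle)]
  · intro z hz
    have hle : 1 ≤ z / R := (one_le_div hR).2 (le_of_lt hz)
    simp [tent, max_eq_left (sub_nonpos.2 hle)]

lemma L2muSq_mono {t : ℝ} {h k : ℝ → ℝ} (hhk : ∀ z > 0, |h z| ≤ |k z|) :
    L2muSq lam t h ≤ L2muSq lam t k :=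
  setLIntegral_mono' measurableSet_Ioi fun z hz =>
    ENNReal.ofReal_le_ofReal (mul_le_mul_of_nonneg_left (sq_le_sq.2 (hhk z hz)) (mu_nonneg _ _ _))

lemma abs_tent_mul_le_abs_tent_mul {R' z : ℝ} (hR : 0 < R) (hRR' : R ≤ R') (hz : 0 ≤ z) (x : ℝ) :
    |tent R z * x| ≤ |tent R' z * x| := by
  rw [abs_mul, abs_mul, abs_of_nonneg (tent_nonneg R z), abs_of_nonneg (tent_nonneg R' z)]
  exact mul_le_mul_of_nonneg_right (tent_le_tent hR hRR' hz) (abs_nonneg _)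

lemma L2muSq_tent_mul_le (hR : 0 ≤ R) (lam t : ℝ) (h : ℝ → ℝ) :
    L2muSq lam t (fun z => tent R z * h z) ≤ L2muSq lam t h := by
  refine L2muSq_mono fun z hz => ?_
  rw [abs_mul, abs_of_nonneg (tent_nonneg R z)]
  exact mul_le_of_le_one_left (abs_nonneg _) (tent_le_one hR (le_of_lt hz))

lemma ofReal_weightedDensity (hs : 0 ≤ 1 + s) (z : ℝ) :
    ENNReal.ofReal (weightedDensity a lam h (s, z))
      = ENNReal.ofReal ((1 + s) ^ a) * ENNReal.ofReal (mu lam s z * h s z ^ 2) :=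
  ENNReal.ofReal_mul (Real.rpow_nonneg hs a)

lemma lintegral_weightedDensity_cutoff (hs : 0 ≤ 1 + s) (hR : 0 < R) :
    ∫⁻ z in Ioc 0 R, ENNReal.ofReal (weightedDensity a lam (fun s z => (1 - z / R) * h s z) (s, z))
      = ENNReal.ofReal ((1 + s) ^ a) * L2muSq lam s (fun z => tent R z * h s z) := by
  simp only [ofReal_weightedDensity hs]
  rw [lintegral_const_mul' _ _ ENNReal.ofReal_ne_top, L2muSq_tent_mul hR]

lemma lintegral_weightedDensity_le (hs : 0 ≤ 1 + s) :
    ∫⁻ z in Ioc 0 R, ENNReal.ofReal (weightedDensity a lam h (s, z))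
      ≤ ENNReal.ofReal ((1 + s) ^ a) * L2muSq lam s (h s) := by
  simp only [ofReal_weightedDensity hs]
  rw [lintegral_const_mul' _ _ ENNReal.ofReal_ne_top]
  gcongr
  exact lintegral_mono_set Ioc_subset_Ioi_self

namespace IsDampedHeatSolution

lemma hasDerivAt_fst (hH : IsDampedHeatSolution γ H) {z : ℝ} (hs : 0 ≤ s) (hz : 0 ≤ z) :
    HasDerivAt (fun s => H s z) (deriv (deriv (H s)) z - γ / (1 + s) * H s z) s := by
  have hdiff : DifferentiableAt ℝ (fun s => H s z) s :=
    ((hH.contDiff.comp (contDiff_prodMk_left z)).differentiable two_ne_zero).differentiableAt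
  refine hdiff.hasDerivAt.congr_deriv ?_
  linarith [hH.damped_heat_eq s hs z hz]

lemma hasDerivAt_snd (hH : IsDampedHeatSolution γ H) (s z : ℝ) :
    HasDerivAt (H s) (deriv (H s) z) z :=
  ((hH.contDiff.comp (contDiff_prodMk_right s)).differentiable
    two_ne_zero).differentiableAt.hasDerivAt

lemma contDiff_deriv (hH : IsDampedHeatSolution γ H) :
    ContDiff ℝ 1 fun p : ℝ × ℝ => deriv (H p.1) p.2 :=
  contDiff_deriv_right_s19 (by simpa only [one_add_one_eq_two] using hH.contDiff)

lemma hasDerivAt_deriv_snd (hH : IsDampedHeatSolution γ H) (s z : ℝ) :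
    HasDerivAt (deriv (H s)) (deriv (deriv (H s)) z) z :=
  ((hH.contDiff_deriv.comp (contDiff_prodMk_right s)).differentiable
    one_ne_zero).differentiableAt.hasDerivAt

lemma hasDerivAt_weightedDensity_cutoff (hH : IsDampedHeatSolution γ H) (a lam R : ℝ) {z : ℝ}
    (hs : 0 ≤ s) (hz : 0 ≤ z) :
    HasDerivAt (fun s => weightedDensity a lam (fun s z => (1 - z / R) * H s z) (s, z))
      ((1 + s) ^ a * (mu lam s z *
        ((a / (1 + s) - lam * z ^ 2 / (4 * (1 + s) ^ 2)) * ((1 - z / R) * H s z) ^ 2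
          + 2 * ((1 - z / R) * H s z)
            * ((1 - z / R) * (deriv (deriv (H s)) z - γ / (1 + s) * H s z))))) s :=
  hasDerivAt_rpow_mul_mu_mul_sq (by linarith) ((hH.hasDerivAt_fst hs hz).const_mul (1 - z / R))

lemma lintegral_weightedDensity_cutoff_le (hH : IsDampedHeatSolution γ H) (hlam : lam ∈ Icc 0 1)
    (hδ : δ ∈ Ico 0 2) (ha : a = (4 * γ + lam * (1 - δ)) / 2) (hT : 0 ≤ T) (hR : 0 < R) :
    (∫⁻ z in Ioc 0 R,
          ENNReal.ofReal (weightedDensity a lam (fun s z => (1 - z / R) * H s z) (T, z)))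
        + ∫⁻ s in Ioc 0 T, ∫⁻ z in Ioc 0 R, ENNReal.ofReal
          (δ * weightedDensity a lam (fun s z => (1 - z / R) * deriv (H s) z) (s, z))
      ≤ (∫⁻ z in Ioc 0 R,
          ENNReal.ofReal (weightedDensity a lam (fun s z => (1 - z / R) * H s z) (0, z)))
        + ∫⁻ s in Ioc 0 T, ∫⁻ z in Ioc 0 R, ENNReal.ofReal
          (4 / (2 - δ) * R⁻¹ ^ 2 * weightedDensity a lam H (s, z)) := by
  have hpos {p : ℝ × ℝ} (hp : p ∈ Icc (0, 0) (T, R)) : 0 < 1 + p.1 := by linarith [hp.1.1]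
  have hδ' : 0 ≤ 4 / (2 - δ) * R⁻¹ ^ 2 :=
    mul_nonneg (div_nonneg zero_le_four (sub_nonneg.2 hδ.2.le)) (sq_nonneg _)
  have hcut : ContDiff ℝ 1 fun p : ℝ × ℝ => 1 - p.2 / R := by fun_prop
  have hcont {h : ℝ → ℝ → ℝ} (hh : ContDiff ℝ 1 fun p : ℝ × ℝ => h p.1 p.2) :
      ContinuousOn (weightedDensity a lam h) (Icc (0, 0) (T, R)) :=
    (contDiffOn_weightedDensity hh).continuousOn.mono fun _ => hpos
  have hH1 : ContDiff ℝ 1 fun p : ℝ × ℝ => H p.1 p.2 := hH.contDiff.of_le one_le_two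
  refine lintegral_add_lintegral_le_of_deriv_add_le (a := (0, 0)) (b := (T, R))
    (g := energyFlux a lam (lam * (1 - δ) / 2) R H) (Prod.mk_le_mk.2 ⟨hT, hR.le⟩)
    isOpen_setOf_one_add_fst_pos (fun _ => hpos) (contDiffOn_weightedDensity (hcut.mul hH1))
    (contDiffOn_energyFlux (by simpa only [one_add_one_eq_two] using hH.contDiff))
    (continuousOn_const.mul (hcont (hcut.mul hH.contDiff_deriv)))
    (continuousOn_const.mul (hcont hH1))
    (fun p hp => weightedDensity_nonneg (hpos hp))
    (fun p hp => mul_nonneg hδ.1 (weightedDensity_nonneg (hpos hp)))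
    (fun p hp => mul_nonneg hδ' (weightedDensity_nonneg (hpos hp)))
    (fun p hp => hH.hasDerivAt_weightedDensity_cutoff a lam R hp.1.1 hp.1.2)
    (fun p _ => hasDerivAt_energyFlux_s19 a lam _ R (hH.hasDerivAt_snd p.1 p.2)
      (hH.hasDerivAt_deriv_snd p.1 p.2))
    (fun s hs => by simp [energyFlux, hH.neumann s hs.1])
    (fun s _ => by simp [energyFlux, hR.ne']) fun p hp => ?_
  have hχ : 0 ≤ 1 - p.2 / R := sub_nonneg.2 ((div_le_one hR).2 hp.2.2)
  have hW : 0 ≤ (1 + p.1) ^ a * mu lam p.1 p.2 :=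
    mul_nonneg (Real.rpow_nonneg (hpos hp).le a) (mu_nonneg _ _ _)
  have hineq := mul_le_mul_of_nonneg_left (energy_density_inequality (γ := γ) hlam hδ (hpos hp)
    hp.1.2 hχ (inv_nonneg.2 hR.le) (H p.1 p.2) (deriv (H p.1) p.2) (deriv (deriv (H p.1)) p.2)) hW
  rw [← ha] at hineq
  simp only [Pi.mul_apply, weightedDensity]
  linear_combination hineq

lemma local_energy_le (hH : IsDampedHeatSolution γ H) (hlam : lam ∈ Icc 0 1) (hδ : δ ∈ Ico 0 2)
    (ha : a = (4 * γ + lam * (1 - δ)) / 2) (hT : 0 ≤ T) (hR : 0 < R) :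
    ENNReal.ofReal ((1 + T) ^ a) * L2muSq lam T (fun z => tent R z * H T z)
        + ENNReal.ofReal δ * ∫⁻ s in Ioc 0 T,
          ENNReal.ofReal ((1 + s) ^ a) * L2muSq lam s (fun z => tent R z * deriv (H s) z)
      ≤ L2muSq lam 0 (H 0) + ENNReal.ofReal (4 / (2 - δ) * R⁻¹ ^ 2) * ∫⁻ s in Ioc 0 T,
          ENNReal.ofReal ((1 + s) ^ a) * L2muSq lam s (H s) := by
  have hδ' : 0 ≤ 4 / (2 - δ) * R⁻¹ ^ 2 :=
    mul_nonneg (div_nonneg zero_le_four (sub_nonneg.2 hδ.2.le)) (sq_nonneg _)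
  have hpos {s : ℝ} (hs : s ∈ Ioc 0 T) : 0 ≤ 1 + s := by linarith [hs.1]
  have hlocal := hH.lintegral_weightedDensity_cutoff_le hlam hδ ha hT hR
  simp only [ENNReal.ofReal_mul hδ.1, ENNReal.ofReal_mul hδ',
    lintegral_const_mul' _ _ ENNReal.ofReal_ne_top] at hlocal
  rw [lintegral_weightedDensity_cutoff (by linarith) hR,
    lintegral_weightedDensity_cutoff (by linarith) hR,
    setLIntegral_congr_fun measurableSet_Ioc fun s hs =>
      lintegral_weightedDensity_cutoff (h := fun s => deriv (H s)) (hpos hs) hR] at hlocal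
  refine hlocal.trans (add_le_add ?_ (mul_le_mul_right
    (setLIntegral_mono' measurableSet_Ioc fun s hs => lintegral_weightedDensity_le (hpos hs)) _))
  simpa using L2muSq_tent_mul_le hR.le lam 0 (H 0)

end IsDampedHeatSolution

lemma measurable_L2muSq (lam : ℝ) (hh : Measurable fun p : ℝ × ℝ => h p.1 p.2) :
    Measurable fun s => L2muSq lam s (h s) :=
  Measurable.lintegral_prod_right'
    (f := fun p : ℝ × ℝ => ENNReal.ofReal (mu lam p.1 p.2 * h p.1 p.2 ^ 2))
    ((measurable_mu lam).mul (hh.pow_const 2)).ennreal_ofReal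

lemma monotone_L2muSq_tent_mul (lam t : ℝ) (h : ℝ → ℝ) :
    Monotone fun n : ℕ => L2muSq lam t (fun z => tent (n + 1) z * h z) := fun m n hmn =>
  L2muSq_mono fun z hz =>
    abs_tent_mul_le_abs_tent_mul (by positivity) (by gcongr) (le_of_lt hz) (h z)

lemma tendsto_L2muSq_tent_mul (lam t : ℝ) {h : ℝ → ℝ} (hh : Measurable h) :
    Tendsto (fun n : ℕ => L2muSq lam t (fun z => tent (n + 1) z * h z)) atTop
      (nhds (L2muSq lam t h)) := by
  refine lintegral_tendsto_of_tendsto_of_monotone (fun n => ?_) ?_ ?_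
  · exact (((measurable_mu lam).comp measurable_prodMk_left).mul
      (((measurable_tent _).mul hh).pow_const 2)).ennreal_ofReal.aemeasurable
  · filter_upwards [ae_restrict_mem measurableSet_Ioi] with z hz m n hmn
    exact ENNReal.ofReal_le_ofReal (mul_le_mul_of_nonneg_left (sq_le_sq.2
      (abs_tent_mul_le_abs_tent_mul (by positivity) (by gcongr) (le_of_lt hz) (h z)))
      (mu_nonneg _ _ _))
  · refine Eventually.of_forall fun z => ENNReal.tendsto_ofReal ?_
    have htent : Tendsto (fun n : ℕ => tent (n + 1) z) atTop (nhds 1) :=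
      (tendsto_tent z).comp (tendsto_atTop_add_const_right _ _ tendsto_natCast_atTop_atTop)
    simpa using ((htent.mul_const (h z)).pow 2).const_mul (mu lam t z)

lemma tendsto_lintegral_L2muSq_tent_mul (lam : ℝ) (ν : Measure ℝ) {c : ℝ → ENNReal}
    (hc : Measurable c) (hc' : ∀ s, c s ≠ ⊤) (hh : Measurable fun p : ℝ × ℝ => h p.1 p.2) :
    Tendsto (fun n : ℕ => ∫⁻ s, c s * L2muSq lam s (fun z => tent (n + 1) z * h s z) ∂ν) atTop
      (nhds (∫⁻ s, c s * L2muSq lam s (h s) ∂ν)) := by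
  refine lintegral_tendsto_of_tendsto_of_monotone (fun n => ?_)
    (Eventually.of_forall fun s m n hmn => ?_) (Eventually.of_forall fun s => ?_)
  · exact (hc.mul (measurable_L2muSq lam (h := fun s z => tent (n + 1) z * h s z)
      (((measurable_tent _).comp measurable_snd).mul hh))).aemeasurable
  · exact mul_le_mul_right (monotone_L2muSq_tent_mul lam s (h s) hmn) (c s)
  · exact ENNReal.Tendsto.const_mul
      (tendsto_L2muSq_tent_mul lam s (hh.comp measurable_prodMk_left)) (Or.inr (hc' s))

lemma lintegral_rpow_mul_ne_top (a : ℝ) {F : ℝ → ENNReal} (hF : ∫⁻ s in Ioc 0 T, F s ≠ ⊤) :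
    ∫⁻ s in Ioc 0 T, ENNReal.ofReal ((1 + s) ^ a) * F s ≠ ⊤ := by
  refine ne_top_of_le_ne_top (ENNReal.mul_ne_top (ENNReal.ofReal_ne_top (r := (1 + T) ^ |a|)) hF) ?_
  rw [← lintegral_const_mul' _ _ ENNReal.ofReal_ne_top]
  refine setLIntegral_mono' measurableSet_Ioc fun s hs => mul_le_mul_left ?_ (F s)
  refine ENNReal.ofReal_le_ofReal ?_
  calc (1 + s) ^ a ≤ (1 + s) ^ |a| :=
        Real.rpow_le_rpow_of_exponent_le (by linarith [hs.1]) (le_abs_self a)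
    _ ≤ (1 + T) ^ |a| :=
        Real.rpow_le_rpow (by linarith [hs.1]) (by linarith [hs.2]) (abs_nonneg a)

lemma lintegral_L2muSq_ne_top_of_continuousOn (hh : Measurable fun p : ℝ × ℝ => h p.1 p.2)
    (hfin : ∀ s ∈ Icc 0 T, L2muSq lam s (h s) ≠ ⊤)
    (hcont : ContinuousOn (fun s => ∫ z in Ioi (0 : ℝ), mu lam s z * h s z ^ 2) (Icc 0 T)) :
    ∫⁻ s in Ioc 0 T, L2muSq lam s (h s) ≠ ⊤ := by
  have hnonneg (s z : ℝ) : 0 ≤ mu lam s z * h s z ^ 2 := mul_nonneg (mu_nonneg _ _ _) (sq_nonneg _)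
  have henergy : ∀ s ∈ Ioc 0 T, L2muSq lam s (h s)
      = ENNReal.ofReal (∫ z in Ioi (0 : ℝ), mu lam s z * h s z ^ 2) := fun s hs => by
    have hmeas : Measurable fun z => mu lam s z * h s z ^ 2 :=
      ((measurable_mu lam).mul (hh.pow_const 2)).comp measurable_prodMk_left
    refine (ofReal_integral_eq_lintegral_ofReal ⟨hmeas.aestronglyMeasurable, ?_⟩
      (Eventually.of_forall (hnonneg s))).symm
    rw [hasFiniteIntegral_iff_ofReal (Eventually.of_forall (hnonneg s))]
    exact (hfin s (Ioc_subset_Icc_self hs)).lt_top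
  rw [setLIntegral_congr_fun measurableSet_Ioc henergy]
  exact ((hcont.integrableOn_compact isCompact_Icc).mono_set
    Ioc_subset_Icc_self).lintegral_lt_top.ne

theorem statement19_general (hH : IsDampedHeatSolution γ H) (hlam : lam ∈ Icc 0 1)
    (hδ : δ ∈ Ico 0 2) {t : ℝ} (ht : 0 ≤ t)
    (hfin : ∫⁻ s in Ioc 0 t, L2muSq lam s (H s) ≠ ⊤) :
    ENNReal.ofReal ((1 + t) ^ ((4 * γ + lam * (1 - δ)) / 2)) * L2muSq lam t (H t)
        + ENNReal.ofReal δ * ∫⁻ s in Ioc 0 t,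
          ENNReal.ofReal ((1 + s) ^ ((4 * γ + lam * (1 - δ)) / 2)) * L2muSq lam s (deriv (H s))
      ≤ L2muSq lam 0 (H 0) := by
  set a := (4 * γ + lam * (1 - δ)) / 2 with ha
  have hHt : Measurable (H t) := hH.contDiff.continuous.measurable.comp measurable_prodMk_left
  have henergy := ENNReal.Tendsto.const_mul (tendsto_L2muSq_tent_mul lam t hHt)
    (Or.inr (ENNReal.ofReal_ne_top (r := (1 + t) ^ a)))
  have hdissipation := ENNReal.Tendsto.const_mul (tendsto_lintegral_L2muSq_tent_mul lam
    (volume.restrict (Ioc 0 t)) (c := fun s => ENNReal.ofReal ((1 + s) ^ a)) (by fun_prop)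
    (fun _ => ENNReal.ofReal_ne_top) (h := fun s => deriv (H s))
    hH.contDiff_deriv.continuous.measurable) (Or.inr (ENNReal.ofReal_ne_top (r := δ)))
  have hcoeff : Tendsto (fun n : ℕ => ENNReal.ofReal (4 / (2 - δ) * ((n : ℝ) + 1)⁻¹ ^ 2)) atTop
      (nhds 0) := by
    simpa using ENNReal.tendsto_ofReal
      (((tendsto_one_div_add_atTop_nhds_zero_nat (𝕜 := ℝ)).pow 2).const_mul (4 / (2 - δ)))
  have herror := (ENNReal.Tendsto.mul_const hcoeff
    (Or.inr (lintegral_rpow_mul_ne_top a hfin))).const_add (L2muSq lam 0 (H 0))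
  rw [zero_mul, add_zero] at herror
  exact le_of_tendsto_of_tendsto' (henergy.add hdissipation) herror fun n =>
    hH.local_energy_le hlam hδ ha ht n.cast_add_one_pos

end LocalEnergy

/-- Weighted energy decay for the damped heat equation
`(∂ₜ − ∂_z² + 2/(1+t)) H = 0` with Neumann boundary condition: for every `0 < δ < 2`
and `t ≥ 0`,
`(1+t)^{(9−δ)/2} ‖H(t)‖²_{L²_μ} + δ ∫₀ᵗ (1+s)^{(9−δ)/2} ‖∂_zH(s)‖²_{L²_μ} ds ≤ ‖H(0)‖²_{L²_{μ_in}}`. -/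
theorem statement19 (H : ℝ → ℝ → ℝ)
    (hsm : ContDiff ℝ (⊤ : ℕ∞) fun p : ℝ × ℝ => H p.1 p.2)
    (heq : ∀ t ≥ (0 : ℝ), ∀ z ≥ (0 : ℝ),
      deriv (fun s => H s z) t - deriv (deriv (H t)) z + 2 / (1 + t) * H t z = 0)
    (hbc : ∀ t ≥ (0 : ℝ), deriv (H t) 0 = 0)
    (hmem : ∀ t ≥ (0 : ℝ),
      L2muSq 1 t (H t) < ⊤ ∧ L2muSq 1 t (fun z => z * H t z) < ⊤ ∧
        L2muSq 1 t (deriv (H t)) < ⊤)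
    (hlim1 : ∀ t ≥ (0 : ℝ),
      Tendsto (fun z => mu 1 t z * H t z * deriv (H t) z) atTop (nhds 0))
    (hlim2 : ∀ t ≥ (0 : ℝ),
      Tendsto (fun z => z * mu 1 t z * (H t z) ^ 2) atTop (nhds 0))
    (hdiff : ∀ t ≥ (0 : ℝ),
      HasDerivAt (fun s => ∫ z in Set.Ioi (0 : ℝ), mu 1 s z * (H s z) ^ 2)
        (∫ z in Set.Ioi (0 : ℝ), deriv (fun s => mu 1 s z * (H s z) ^ 2) t) t) :
    ∀ δ : ℝ, 0 < δ → δ < 2 →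
      ∀ t ≥ (0 : ℝ),
        ENNReal.ofReal ((1 + t) ^ ((9 - δ) / 2)) * L2muSq 1 t (H t)
            + ENNReal.ofReal δ *
                ∫⁻ s in Set.Ioc (0 : ℝ) t,
                  ENNReal.ofReal ((1 + s) ^ ((9 - δ) / 2)) * L2muSq 1 s (deriv (H s))
          ≤ L2muSq 1 0 (H 0) := by
  intro δ hδ hδ' t ht
  have hH : IsDampedHeatSolution 2 H := ⟨hsm.of_le (WithTop.coe_le_coe.2 le_top), heq, hbc⟩
  have hfin := lintegral_L2muSq_ne_top_of_continuousOn hsm.continuous.measurable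
    (fun s hs => (hmem s hs.1).1.ne) fun s (hs : s ∈ Icc 0 t) =>
      (hdiff s hs.1).continuousAt.continuousWithinAt
  have hexp : (4 * 2 + 1 * (1 - δ)) / 2 = (9 - δ) / 2 := by ring
  simpa only [hexp] using statement19_general hH (right_mem_Icc.2 zero_le_one) ⟨hδ.le, hδ'⟩ ht hfin
end
end
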